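/- arXiv:2111.04713 — 8 statements merged into one kernel-verified Lean document; each statement's English description precedes it below -/
import Mathlib

section
/- For every positive integer c, the four-fold complete exponential sum of Kloosterman sums satisfies ∑_{a₁ mod c} ∑_{a₂ mod c} ∑_{b₁ mod c} ∑_{b₂ mod c} S(a₁(a₁+b₁), a₂(a₂+b₂); c) · e_c(2a₁a₂ + a₁b₂ + a₂b₁) = c³·φ(c), where φ is Euler's totient function. -/
/-!
For a fixed unit `u` in the Kloosterman sum, the total phase factors as `t (b₂ + u (t + b₁))`
with `t = a₁ + u⁻¹ a₂`. Summing over `b₂` gives, by orthogonality, the size of the ring if `t = 0`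
and `0` otherwise; the condition `t = 0` determines `a₁`, while `a₂`, `b₁` and `u` remain free.
-/

open scoped BigOperators

/-- The additive character `e_c(x) = e^{2πi x / c}` evaluated at a residue class mod `c`. -/
noncomputable def ec (c : ℕ) (x : ZMod c) : ℂ :=
  Complex.exp (2 * Real.pi * Complex.I * (x.val : ℂ) / (c : ℂ))

/-- The classical Kloosterman sum `S(a, b; c) = ∑_{x mod c, (x,c)=1} e_c(a x + b x̄)`. -/
noncomputable def kloostermanS (c : ℕ) [NeZero c] (a b : ZMod c) : ℂ :=
  ∑ x : (ZMod c)ˣ, ec c (a * (x : ZMod c) + b * ((x⁻¹ : (ZMod c)ˣ) : ZMod c))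

section FiniteRing

variable {R R' : Type*} [CommRing R] [CommRing R']

/-- The Kloosterman sum of an additive character `ψ` of a commutative ring with finitely many
units; `kloostermanS c` is the case of the standard character of `ZMod c`. -/
def kloostermanSum [Fintype Rˣ] (ψ : AddChar R R') (a b : R) : R' :=
  ∑ u : Rˣ, ψ (a * u + b * ↑u⁻¹)

lemma fourfold_phase_eq_mul (u : Rˣ) (a₁ a₂ b₁ b₂ : R) :
    a₁ * (a₁ + b₁) * u + a₂ * (a₂ + b₂) * ↑u⁻¹ + (2 * a₁ * a₂ + a₁ * b₂ + a₂ * b₁) =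
      (a₁ + ↑u⁻¹ * a₂) * (b₂ + u * (a₁ + ↑u⁻¹ * a₂ + b₁)) := by
  linear_combination (-a₂ * (2 * a₁ + ↑u⁻¹ * a₂ + b₁)) * u.mul_inv

variable [Fintype R] [IsDomain R'] {ψ : AddChar R R'}

lemma sum_addChar_mul_add [DecidableEq R] (hψ : ψ.IsPrimitive) (t s : R) :
    ∑ b, ψ (t * (b + s)) = if t = 0 then (Fintype.card R : R') else 0 :=
  calc ∑ b, ψ (t * (b + s))
    _ = ∑ b, ψ (b * t) :=
      Fintype.sum_equiv (Equiv.addRight s) _ _ fun b ↦ by rw [Equiv.coe_addRight, mul_comm]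
    _ = if t = 0 then (Fintype.card R : R') else 0 := by
      rw [AddChar.sum_mulShift t hψ, Nat.cast_ite, Nat.cast_zero]

lemma sum_addChar_fourfold_phase (hψ : ψ.IsPrimitive) (u : Rˣ) :
    ∑ a₁ : R, ∑ a₂ : R, ∑ b₁ : R, ∑ b₂ : R,
      ψ (a₁ * (a₁ + b₁) * u + a₂ * (a₂ + b₂) * ↑u⁻¹ + (2 * a₁ * a₂ + a₁ * b₂ + a₂ * b₁)) =
      (Fintype.card R : R') ^ 3 := by
  classical
  calc
    _ = ∑ a₁ : R, ∑ a₂ : R, ∑ _b₁ : R,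
          if a₁ + ↑u⁻¹ * a₂ = 0 then (Fintype.card R : R') else 0 := by
      simp only [fourfold_phase_eq_mul, sum_addChar_mul_add hψ]
    _ = ∑ a₂ : R, ∑ a₁ : R,
          if a₁ = -(↑u⁻¹ * a₂) then (Fintype.card R : R') ^ 2 else 0 := by
      rw [Finset.sum_comm]
      simp [add_eq_zero_iff_eq_neg, sq]
    _ = (Fintype.card R : R') ^ 3 := by
      simp [pow_succ']

theorem kloosterman_fourfold_sum_general [Fintype Rˣ] (hψ : ψ.IsPrimitive) :
    ∑ a₁ : R, ∑ a₂ : R, ∑ b₁ : R, ∑ b₂ : R,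
      kloostermanSum ψ (a₁ * (a₁ + b₁)) (a₂ * (a₂ + b₂)) *
        ψ (2 * a₁ * a₂ + a₁ * b₂ + a₂ * b₁) =
      (Fintype.card R : R') ^ 3 * (Fintype.card Rˣ : R') :=
  calc
    _ = ∑ u : Rˣ, ∑ a₁ : R, ∑ a₂ : R, ∑ b₁ : R, ∑ b₂ : R,
          ψ (a₁ * (a₁ + b₁) * u + a₂ * (a₂ + b₂) * ↑u⁻¹ +
            (2 * a₁ * a₂ + a₁ * b₂ + a₂ * b₁)) := by
      simp only [kloostermanSum, Finset.sum_mul, ← AddChar.map_add_eq_mul,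
        Finset.sum_comm (s := (Finset.univ : Finset Rˣ))]
    _ = ∑ _u : Rˣ, (Fintype.card R : R') ^ 3 := by
      simp only [sum_addChar_fourfold_phase hψ]
    _ = (Fintype.card R : R') ^ 3 * (Fintype.card Rˣ : R') := by
      rw [Finset.sum_const, Finset.card_univ, nsmul_eq_mul, mul_comm]

end FiniteRing

lemma ec_eq_stdAddChar (c : ℕ) [NeZero c] (x : ZMod c) : ec c x = ZMod.stdAddChar x := by
  rw [ZMod.stdAddChar_apply, ZMod.toCircle_apply, ec]

lemma kloostermanS_eq_kloostermanSum (c : ℕ) [NeZero c] (a b : ZMod c) :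
    kloostermanS c a b = kloostermanSum ZMod.stdAddChar a b := by
  simp only [kloostermanS, kloostermanSum, ec_eq_stdAddChar]

/-- For every positive integer `c`,
`∑_{a₁,a₂,b₁,b₂ mod c} S(a₁(a₁+b₁), a₂(a₂+b₂); c) e_c(2a₁a₂ + a₁b₂ + a₂b₁) = c³ φ(c)`. -/
theorem kloosterman_fourfold_sum (c : ℕ) [NeZero c] :
    ∑ a₁ : ZMod c, ∑ a₂ : ZMod c, ∑ b₁ : ZMod c, ∑ b₂ : ZMod c,
      kloostermanS c (a₁ * (a₁ + b₁)) (a₂ * (a₂ + b₂)) *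
        ec c (2 * a₁ * a₂ + a₁ * b₂ + a₂ * b₁) =
      (c : ℂ) ^ 3 * (Nat.totient c : ℂ) := by
  simpa only [kloostermanS_eq_kloostermanSum, ec_eq_stdAddChar, ZMod.card,
    ZMod.card_units_eq_totient] using
    kloosterman_fourfold_sum_general (ZMod.isPrimitive_stdAddChar c)
end

section
/- Let f: ℝ → ℂ be a Schwartz function (smooth with all derivatives rapidly decaying), let c be a positive integer and a an integer. Then ∑_{n ∈ ℤ, n ≡ a (mod c)} f(n) = (1/c) ∑_{n ∈ ℤ} f̂(n/c) e^{2πi a n/c}, where f̂(ξ) = ∫_{-∞}^{∞} f(x) e^{-2πi x ξ} dx is the Fourier transform of f, and both series converge absolutely. -/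
open MeasureTheory

/-!
Rescaling `x ↦ c * x` carries `ℤ` to the lattice `cℤ` and turns `𝓕 f` into `|c|⁻¹ • 𝓕 f (· / c)`.
Poisson summation on `a + cℤ` is therefore Poisson summation on `ℤ` for the function
`x ↦ f (c * x)`, evaluated at the shift `a / c`.
-/

open Asymptotics Filter
open scoped FourierTransform

section Decay

variable {𝕜 E : Type*} [NormedField 𝕜] [ProperSpace 𝕜] [NormedAddCommGroup E]

theorem isTheta_add_mul_cocompact (a : 𝕜) {c : 𝕜} (hc : c ≠ 0) :
    (fun x => a + c * x) =Θ[cocompact 𝕜] fun x => x := by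
  have const_isLittleO : (fun _ => a) =o[cocompact 𝕜] fun x => c * x :=
    isLittleO_const_left.2 <| Or.inr <|
      tendsto_norm_cocompact_atTop.comp (tendsto_cocompact_mul_left₀ hc)
  exact const_isLittleO.right_isTheta_add.symm.trans ((isTheta_refl _ _).const_mul_left hc)

theorem isBigO_cocompact_rpow_comp_add_mul {f : 𝕜 → E} {s : ℝ}
    (hf : f =O[cocompact 𝕜] (‖·‖ ^ s)) (a : 𝕜) {c : 𝕜} (hc : c ≠ 0) :
    (fun x => f (a + c * x)) =O[cocompact 𝕜] (‖·‖ ^ s) := by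
  have tendsto_affine : Tendsto (fun x => a + c * x) (cocompact 𝕜) (cocompact 𝕜) := by
    simpa [affineHomeomorph, add_comm] using
      (affineHomeomorph c a hc).isClosedEmbedding.tendsto_cocompact
  have norm_isTheta : (fun x => ‖a + c * x‖) =Θ[cocompact 𝕜] (‖·‖) :=
    (isTheta_add_mul_cocompact a hc).norm_left.norm_right
  exact (hf.comp_tendsto tendsto_affine).trans
    (norm_isTheta.rpow (.of_forall fun _ => norm_nonneg _)
      (.of_forall fun _ => norm_nonneg _)).isBigO

theorem summable_norm_add_mul_intCast_of_rpow_decay {f : ℝ → E} {b : ℝ} (hb : 1 < b)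
    (hf : f =O[cocompact ℝ] (|·| ^ (-b))) (a : ℝ) {c : ℝ} (hc : c ≠ 0) :
    Summable fun n : ℤ => ‖f (a + c * n)‖ :=
  summable_of_isBigO (Real.summable_abs_int_rpow hb) <|
    ((isBigO_cocompact_rpow_comp_add_mul hf a hc).comp_tendsto Int.tendsto_coe_cofinite).norm_left

end Decay

theorem fourier_comp_mul_left {E : Type*} [NormedAddCommGroup E] [NormedSpace ℂ E] (f : ℝ → E)
    {c : ℝ} (hc : c ≠ 0) (ξ : ℝ) : 𝓕 (fun x => f (c * x)) ξ = |c|⁻¹ • 𝓕 f (ξ / c) := by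
  simp only [Real.fourier_real_eq]
  rw [← abs_inv, ← Measure.integral_comp_mul_left _ c]
  congr! 4 with x
  field_simp

theorem fourier_eq_integral_mul_exp (f : ℝ → ℂ) (ξ : ℝ) :
    𝓕 f ξ = ∫ x : ℝ, f x * Complex.exp (-(2 * Real.pi * Complex.I * (x : ℂ) * (ξ : ℂ))) := by
  rw [Real.fourier_real_eq_integral_exp_smul]
  congr! 2 with x
  rw [smul_eq_mul, mul_comm]
  congr 2
  push_cast
  ring

section Lattice

variable {f : ℝ → ℂ} {b c : ℝ}

theorem tsum_add_mul_intCast_eq_tsum_fourier (hf : Continuous f) (hb : 1 < b)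
    (hfb : f =O[cocompact ℝ] (|·| ^ (-b))) (hc : c ≠ 0)
    (hF : Summable fun n : ℤ => 𝓕 f (n / c)) (a : ℝ) :
    ∑' n : ℤ, f (a + c * n) =
      (1 / |c| : ℝ) *
        ∑' n : ℤ, 𝓕 f (n / c) * Complex.exp (2 * Real.pi * Complex.I * a * n / c) := by
  have rescaled_decay : (fun x => f (c * x)) =O[cocompact ℝ] (|·| ^ (-b)) := by
    simpa using isBigO_cocompact_rpow_comp_add_mul hfb 0 hc
  have rescaled_summable : Summable fun n : ℤ => 𝓕 (fun x => f (c * x)) n := by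
    simpa only [fourier_comp_mul_left f hc] using hF.const_smul |c|⁻¹
  calc
    ∑' n : ℤ, f (a + c * n) = ∑' n : ℤ, f (c * (a / c + n)) := by
      congr! 3 with n
      field_simp
    _ = ∑' n : ℤ, 𝓕 (fun x => f (c * x)) n * fourier n ((a / c : ℝ) : UnitAddCircle) :=
      Real.tsum_eq_tsum_fourier_of_rpow_decay_of_summable (hf.comp (continuous_const_mul c)) hb
        rescaled_decay rescaled_summable (a / c)
    _ = (1 / |c| : ℝ) *
        ∑' n : ℤ, 𝓕 f (n / c) * Complex.exp (2 * Real.pi * Complex.I * a * n / c) := by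
      rw [← tsum_mul_left]
      congr! 2 with n
      rw [fourier_comp_mul_left f hc, fourier_coe_apply, Complex.real_smul, mul_assoc, one_div]
      congr 3
      push_cast
      ring

theorem poisson_summation_arithmetic_progression_general (hf : Continuous f) (hb : 1 < b)
    (hfb : f =O[cocompact ℝ] (|·| ^ (-b))) (hFb : 𝓕 f =O[cocompact ℝ] (|·| ^ (-b)))
    (hc : c ≠ 0) (a : ℝ) :
    (Summable fun n : ℤ => ‖f (a + c * n)‖) ∧
    (Summable fun n : ℤ => ‖𝓕 f (n / c) * Complex.exp (2 * Real.pi * Complex.I * a * n / c)‖) ∧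
    ∑' n : ℤ, f (a + c * n) =
      (1 / |c| : ℝ) *
        ∑' n : ℤ, 𝓕 f (n / c) * Complex.exp (2 * Real.pi * Complex.I * a * n / c) := by
  have fourier_summable : Summable fun n : ℤ => ‖𝓕 f (n / c)‖ := by
    simpa [div_eq_inv_mul] using
      summable_norm_add_mul_intCast_of_rpow_decay hb hFb 0 (inv_ne_zero hc)
  refine ⟨summable_norm_add_mul_intCast_of_rpow_decay hb hfb a hc, ?_,
    tsum_add_mul_intCast_eq_tsum_fourier hf hb hfb hc fourier_summable.of_norm a⟩
  simpa [Complex.norm_exp] using fourier_summable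

end Lattice

/-- Poisson summation over an arithmetic progression: for a Schwartz function `f`,
a positive integer `c` and an integer `a`,
`∑_{n ≡ a (mod c)} f(n) = (1/c) ∑_{n ∈ ℤ} f̂(n/c) e^{2πi a n / c}`,
where `f̂(ξ) = ∫ f(x) e^{-2πi x ξ} dx`, and both series converge absolutely. -/
theorem poisson_summation_arithmetic_progression
    (f : SchwartzMap ℝ ℂ) (c : ℕ) (hc : 0 < c) (a : ℤ) :
    (Summable fun n : ℤ => ‖f ((a : ℝ) + (c : ℝ) * (n : ℝ))‖) ∧
    (Summable fun n : ℤ =>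
      ‖(∫ x : ℝ, f x * Complex.exp (-(2 * Real.pi * Complex.I * (x : ℂ) * (((n : ℝ) / (c : ℝ) : ℝ) : ℂ)))) *
          Complex.exp (2 * Real.pi * Complex.I * (a : ℂ) * (n : ℂ) / (c : ℂ))‖) ∧
    (∑' n : ℤ, f ((a : ℝ) + (c : ℝ) * (n : ℝ))) =
      (1 / (c : ℂ)) *
        ∑' n : ℤ,
          (∫ x : ℝ, f x * Complex.exp (-(2 * Real.pi * Complex.I * (x : ℂ) * (((n : ℝ) / (c : ℝ) : ℝ) : ℂ)))) *
            Complex.exp (2 * Real.pi * Complex.I * (a : ℂ) * (n : ℂ) / (c : ℂ)) := by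
  simpa [fourier_eq_integral_mul_exp] using
    poisson_summation_arithmetic_progression_general f.continuous one_lt_two
      (f.isBigO_cocompact_rpow (-2)) ((𝓕 f).isBigO_cocompact_rpow (-2))
      (Nat.cast_ne_zero.2 hc.ne' : (c : ℝ) ≠ 0) a
end

section
/- Let m₁ and m₂ be distinct positive integers. Then the number of pairs (n₁, n₂) of positive integers satisfying n₁(n₁+m₁) = n₂(n₂+m₂) is at most d(|m₁² − m₂²|), the number of positive divisors of |m₁² − m₂²|. -/
/-! Completing the squares turns a solution of `n₁ (n₁ + m₁) = n₂ (n₂ + m₂)` into a factorization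
`A * B = m₁ ^ 2 - m₂ ^ 2` with `A, B = (2 * n₁ + m₁) ± (2 * n₂ + m₂)`. As the product is nonzero,
`A` determines `B`, and `A` and `B` together determine `(n₁, n₂)`; so the solutions with `A > 0`
inject into the positive divisors of `|m₁ ^ 2 - m₂ ^ 2|`. -/

section CommRing

variable {R : Type*} [CommRing R] {m₁ m₂ : R} {p : R × R}

/-- The solutions `(n₁, n₂)` of `n₁ (n₁ + m₁) = n₂ (n₂ + m₂)` in a commutative ring. -/
def shiftedSquareCoincidences (m₁ m₂ : R) : Set (R × R) :=
  {p | p.1 * (p.1 + m₁) = p.2 * (p.2 + m₂)}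

/-- The factor `A = (2 * n₁ + m₁) + (2 * n₂ + m₂)` of `m₁ ^ 2 - m₂ ^ 2` attached to a solution
`(n₁, n₂)`; it is defined for all pairs, solutions or not. -/
def completedSquareSum (m₁ m₂ : R) (p : R × R) : R :=
  (2 * p.1 + m₁) + (2 * p.2 + m₂)

theorem completedSquareSum_mul_sub (hp : p ∈ shiftedSquareCoincidences m₁ m₂) :
    completedSquareSum m₁ m₂ p * ((2 * p.1 + m₁) - (2 * p.2 + m₂)) = m₁ ^ 2 - m₂ ^ 2 := by
  have heq : p.1 * (p.1 + m₁) = p.2 * (p.2 + m₂) := hp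
  unfold completedSquareSum
  linear_combination 4 * heq

theorem completedSquareSum_dvd (hp : p ∈ shiftedSquareCoincidences m₁ m₂) :
    completedSquareSum m₁ m₂ p ∣ m₁ ^ 2 - m₂ ^ 2 :=
  Dvd.intro _ (completedSquareSum_mul_sub hp)

theorem injOn_completedSquareSum [NoZeroDivisors R] [NeZero (2 : R)] (hne : m₁ ^ 2 ≠ m₂ ^ 2) :
    Set.InjOn (completedSquareSum m₁ m₂) (shiftedSquareCoincidences m₁ m₂) := by
  intro p hp q hq hsum
  have hsum_ne : completedSquareSum m₁ m₂ q ≠ 0 :=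
    ne_zero_of_dvd_ne_zero (sub_ne_zero.mpr hne) (completedSquareSum_dvd hq)
  have hdiff : (2 * p.1 + m₁) - (2 * p.2 + m₂) = (2 * q.1 + m₁) - (2 * q.2 + m₂) := by
    apply mul_left_cancel₀ hsum_ne
    rw [completedSquareSum_mul_sub hq, ← hsum, completedSquareSum_mul_sub hp]
  have hfour : (2 * 2 : R) ≠ 0 := mul_ne_zero two_ne_zero two_ne_zero
  unfold completedSquareSum at hsum
  ext
  · apply mul_left_cancel₀ hfour
    linear_combination hsum + hdiff
  · apply mul_left_cancel₀ hfour
    linear_combination hsum - hdiff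

end CommRing

section Int

variable {m₁ m₂ : ℤ}

theorem mapsTo_natAbs_completedSquareSum (hne : m₁ ^ 2 ≠ m₂ ^ 2) :
    Set.MapsTo (Int.natAbs ∘ completedSquareSum m₁ m₂) (shiftedSquareCoincidences m₁ m₂)
      (m₁ ^ 2 - m₂ ^ 2).natAbs.divisors := fun _ hp =>
  Nat.mem_divisors.mpr ⟨Int.natAbs_dvd_natAbs.mpr (completedSquareSum_dvd hp),
    Int.natAbs_ne_zero.mpr (sub_ne_zero.mpr hne)⟩

theorem injOn_natAbs_completedSquareSum (hne : m₁ ^ 2 ≠ m₂ ^ 2) :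
    Set.InjOn (Int.natAbs ∘ completedSquareSum m₁ m₂)
      {p ∈ shiftedSquareCoincidences m₁ m₂ | 0 < completedSquareSum m₁ m₂ p} :=
  Int.injOn_natAbs_Ici.comp ((injOn_completedSquareSum hne).mono (Set.sep_subset _ _))
    fun _ hp => hp.2.le

end Int

/- The involution `(n₁, n₂) ↦ (-m₁ - n₁, -m₂ - n₂)` preserves the equation and negates
`completedSquareSum`, so the positivity condition keeps exactly half of the integer solutions. -/
theorem count_shifted_square_coincidences_general (m₁ m₂ : ℤ) (hne : m₁ ^ 2 ≠ m₂ ^ 2) :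
    {p ∈ shiftedSquareCoincidences m₁ m₂ | 0 < completedSquareSum m₁ m₂ p}.Finite ∧
    {p ∈ shiftedSquareCoincidences m₁ m₂ | 0 < completedSquareSum m₁ m₂ p}.ncard ≤
      (m₁ ^ 2 - m₂ ^ 2).natAbs.divisors.card := by
  have hmaps := (mapsTo_natAbs_completedSquareSum hne).mono_left
    (Set.sep_subset _ fun p => 0 < completedSquareSum m₁ m₂ p)
  have hinj := injOn_natAbs_completedSquareSum hne
  refine ⟨.of_injOn hmaps hinj (Finset.finite_toSet _), ?_⟩
  rw [← Set.ncard_coe_finset]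
  exact Set.ncard_le_ncard_of_injOn _ hmaps hinj (Finset.finite_toSet _)

theorem mapsTo_natCast_shiftedSquareCoincidences (m₁ m₂ : ℕ) :
    Set.MapsTo (Prod.map Nat.cast Nat.cast)
      {p : ℕ × ℕ | 0 < p.1 ∧ 0 < p.2 ∧ p.1 * (p.1 + m₁) = p.2 * (p.2 + m₂)}
      {p ∈ shiftedSquareCoincidences (m₁ : ℤ) m₂ | 0 < completedSquareSum (m₁ : ℤ) m₂ p} := by
  rintro ⟨n₁, n₂⟩ ⟨hn₁, -, heq⟩
  have hcast : (n₁ : ℤ) * (n₁ + m₁) = n₂ * (n₂ + m₂) := mod_cast heq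
  have hpos : (0 : ℤ) < (2 * n₁ + m₁) + (2 * n₂ + m₂) := by positivity
  exact ⟨hcast, hpos⟩

/-- For distinct positive integers `m₁ ≠ m₂`, the number of pairs `(n₁, n₂)` of
positive integers with `n₁(n₁+m₁) = n₂(n₂+m₂)` is at most `d(|m₁² − m₂²|)`,
the number of positive divisors of `|m₁² − m₂²|`. -/
theorem count_shifted_square_coincidences (m₁ m₂ : ℕ) (h₁ : 0 < m₁) (h₂ : 0 < m₂)
    (hne : m₁ ≠ m₂) :
    {p : ℕ × ℕ | 0 < p.1 ∧ 0 < p.2 ∧ p.1 * (p.1 + m₁) = p.2 * (p.2 + m₂)}.Finite ∧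
    {p : ℕ × ℕ | 0 < p.1 ∧ 0 < p.2 ∧ p.1 * (p.1 + m₁) = p.2 * (p.2 + m₂)}.ncard ≤
      (((m₁ : ℤ) ^ 2 - (m₂ : ℤ) ^ 2).natAbs).divisors.card := by
  have hsq : (m₁ : ℤ) ^ 2 ≠ (m₂ : ℤ) ^ 2 := mod_cast (Nat.pow_left_injective two_ne_zero).ne hne
  have hmaps := mapsTo_natCast_shiftedSquareCoincidences m₁ m₂
  have hinj : Function.Injective (Prod.map Nat.cast Nat.cast : ℕ × ℕ → ℤ × ℤ) :=
    Nat.cast_injective.prodMap Nat.cast_injective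
  obtain ⟨hfin, hcard⟩ := count_shifted_square_coincidences_general (m₁ : ℤ) m₂ hsq
  exact ⟨.of_injOn hmaps hinj.injOn hfin,
    (Set.ncard_le_ncard_of_injOn _ hmaps hinj.injOn hfin).trans hcard⟩
end

section
/- Let h: (0,∞) → ℂ be smooth with compact support contained in (0,∞), let w ∈ ℂ, and for v > 0 define ħ^ℜ_w(v) = ∫₀^∞ h(√u)·(2πu)^{−1/2}·u^{w/2}·cos(uv) du. Then for all integers j ≥ 0 and A ≥ 0 there is a constant C depending only on h, Re(w), j and A such that |(d/dv)^j ħ^ℜ_w(v)| ≤ C·(1+|w|)^A·v^{−A} for all v > 0. -/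
open MeasureTheory

/-- `ħ^ℜ_w(v) = ∫₀^∞ h(√u) (2πu)^{−1/2} u^{w/2} cos(uv) du`. -/
noncomputable def hbarRe (h : ℝ → ℂ) (w : ℂ) (v : ℝ) : ℂ :=
  ∫ u in Set.Ioi (0 : ℝ),
    h (Real.sqrt u) * ((1 / Real.sqrt (2 * Real.pi * u) : ℝ) : ℂ) *
      (u : ℂ) ^ (w / 2) * ((Real.cos (u * v) : ℝ) : ℂ)

/-!
Extended by zero to `ℝ`, the integrand makes `ħ^ℜ_w` the cosine transform of
`F_s(u) = g(u) u^s`, where `s = w / 2` and `g(u) = h(√u) (2πu)^{−1/2}` is a test function on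
`(0, ∞)`. Since `F_s' = g' u^s + s (g / u) u^s`, it follows by induction that `F_s^{(n)}` is
dominated by `(1 + |s|)^n` times a fixed compactly supported function depending only on `Re s`,
and the standard decay estimates for the Fourier transform convert derivatives of `F_s` into
powers of `1 / v`.
-/

open Set Filter
open scoped ContDiff FourierTransform

section TestFunctions

variable {E F : Type*} [NormedAddCommGroup E] [NormedSpace ℝ E] [NormedAddCommGroup F]
  [NormedSpace ℝ F] {n m : ℕ∞ω} {Ω : Set E} {f : E → F}

theorem contDiff_of_tsupport (hf : ∀ x ∈ tsupport f, ContDiffAt ℝ n f x) :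
    ContDiff ℝ n f :=
  contMDiff_iff_contDiff.1 <| contMDiff_of_tsupport fun x hx => (hf x hx).contMDiffAt

/-- The unbundled form of `TestFunction`: `f` is of class `C^n` and its support is a compact
subset of `Ω`. A predicate is convenient because all functions below are given by formulas. -/
structure IsTestFunctionOn (n : ℕ∞ω) (Ω : Set E) (f : E → F) : Prop where
  contDiff : ContDiff ℝ n f
  hasCompactSupport : HasCompactSupport f
  tsupport_subset : tsupport f ⊆ Ω

namespace IsTestFunctionOn

theorem of_le (hf : IsTestFunctionOn n Ω f) (hmn : m ≤ n) : IsTestFunctionOn m Ω f :=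
  ⟨hf.contDiff.of_le hmn, hf.hasCompactSupport, hf.tsupport_subset⟩

theorem eq_zero_of_notMem (hf : IsTestFunctionOn n Ω f) {x : E} (hx : x ∉ Ω) : f x = 0 :=
  image_eq_zero_of_notMem_tsupport (notMem_subset hf.tsupport_subset hx)

protected theorem mul {𝔸 : Type*} [NormedRing 𝔸] [NormedAlgebra ℝ 𝔸] {f g : E → 𝔸}
    (hf : IsTestFunctionOn n Ω f) (hg : ∀ x ∈ Ω, ContDiffAt ℝ n g x) :
    IsTestFunctionOn n Ω fun x => f x * g x where
  contDiff := contDiff_of_tsupport fun x hx =>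
    hf.contDiff.contDiffAt.mul (hg x (hf.tsupport_subset (tsupport_mul_subset_left hx)))
  hasCompactSupport := hf.hasCompactSupport.mul_right
  tsupport_subset := tsupport_mul_subset_left.trans hf.tsupport_subset

protected theorem deriv {Ω : Set ℝ} {f : ℝ → F} (hf : IsTestFunctionOn (n + 1) Ω f) :
    IsTestFunctionOn n Ω (deriv f) where
  contDiff := (contDiff_succ_iff_deriv.1 hf.contDiff).2.2
  hasCompactSupport := hf.hasCompactSupport.deriv
  tsupport_subset := tsupport_deriv_subset.trans hf.tsupport_subset

theorem integrable_pow_mul_norm_iteratedFDeriv [MeasurableSpace E] [BorelSpace E]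
    {μ : Measure E} [IsFiniteMeasureOnCompacts μ] (hf : IsTestFunctionOn n Ω f) (k : ℕ) {l : ℕ}
    (hl : l ≤ n) : Integrable (fun x => ‖x‖ ^ k * ‖iteratedFDeriv ℝ l f x‖) μ :=
  ((continuous_norm.pow k).mul
    (hf.contDiff.continuous_iteratedFDeriv hl).norm).integrable_of_hasCompactSupport
    (hf.hasCompactSupport.iteratedFDeriv l).norm.mul_left

end IsTestFunctionOn

end TestFunctions

section ComplexPowers

theorem contDiffAt_ofReal_cpow_const {n : ℕ∞ω} (s : ℂ) {u : ℝ} (hu : 0 < u) :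
    ContDiffAt ℝ n (fun u : ℝ => (u : ℂ) ^ s) u :=
  ((analyticAt_id.cpow analyticAt_const
    (Complex.ofReal_mem_slitPlane.2 hu)).contDiffAt.restrict_scalars ℝ).comp u
    Complex.ofRealCLM.contDiff.contDiffAt

theorem hasDerivAt_ofReal_cpow_const_of_pos (s : ℂ) {u : ℝ} (hu : 0 < u) :
    HasDerivAt (fun u : ℝ => (u : ℂ) ^ s) (s * ((u : ℂ)⁻¹ * (u : ℂ) ^ s)) u := by
  have hu₀ : (u : ℂ) ≠ 0 := mod_cast hu.ne'
  refine ((hasDerivAt_id (u : ℂ)).cpow_const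
    (Complex.ofReal_mem_slitPlane.2 hu)).comp_ofReal.congr_deriv ?_
  rw [id, Complex.cpow_sub _ _ hu₀, Complex.cpow_one]
  ring

namespace IsTestFunctionOn

variable {N : ℕ∞ω} {n : ℕ} {g : ℝ → ℂ}

theorem mul_cpow (hg : IsTestFunctionOn N (Ioi 0) g) (s : ℂ) :
    IsTestFunctionOn N (Ioi 0) fun u => g u * (u : ℂ) ^ s :=
  hg.mul fun _ hu => contDiffAt_ofReal_cpow_const s hu

theorem mul_ofReal_inv (hg : IsTestFunctionOn N (Ioi 0) g) :
    IsTestFunctionOn N (Ioi 0) fun u => g u * (u : ℂ)⁻¹ :=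
  hg.mul fun _ hu =>
    Complex.ofRealCLM.contDiff.contDiffAt.inv (Complex.ofReal_ne_zero.2 (ne_of_gt hu))

theorem deriv_mul_cpow (hg : IsTestFunctionOn (N + 1) (Ioi 0) g) (s : ℂ) :
    deriv (fun u => g u * (u : ℂ) ^ s) =
      fun u => deriv g u * (u : ℂ) ^ s + s * (g u * (u : ℂ)⁻¹ * (u : ℂ) ^ s) := by
  ext u
  by_cases hu : u ∈ Ioi 0
  · have hg' : HasDerivAt g (deriv g u) u :=
      (hg.contDiff.differentiable (by simp) u).hasDerivAt
    rw [(hg'.fun_mul (hasDerivAt_ofReal_cpow_const_of_pos s hu)).deriv]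
    ring
  · simp [(hg.mul_cpow s).deriv.eq_zero_of_notMem hu, hg.deriv.eq_zero_of_notMem hu,
      hg.eq_zero_of_notMem hu]

theorem norm_mul_cpow_eq (hg : IsTestFunctionOn N (Ioi 0) g) (s : ℂ) (u : ℝ) :
    ‖g u * (u : ℂ) ^ s‖ = ‖g u * (u : ℂ) ^ (s.re : ℂ)‖ := by
  by_cases hu : u ∈ Ioi 0
  · simp only [norm_mul, Complex.norm_cpow_eq_rpow_re_of_pos hu, Complex.ofReal_re]
  · simp [hg.eq_zero_of_notMem hu]

theorem exists_norm_iteratedDeriv_mul_cpow_le (hg : IsTestFunctionOn n (Ioi 0) g) (r : ℝ) :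
    ∃ φ : ℝ → ℝ, Continuous φ ∧ HasCompactSupport φ ∧ 0 ≤ φ ∧ ∀ s : ℂ, s.re = r → ∀ u : ℝ,
      ‖iteratedDeriv n (fun u => g u * (u : ℂ) ^ s) u‖ ≤ φ u * (1 + ‖s‖) ^ n := by
  induction n generalizing g with
  | zero =>
    have hgr := hg.mul_cpow r
    refine ⟨_, hgr.contDiff.continuous.norm, hgr.hasCompactSupport.norm,
      fun _ => norm_nonneg _, fun s hs u => ?_⟩
    rw [iteratedDeriv_zero, pow_zero, mul_one, hg.norm_mul_cpow_eq, hs]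
  | succ n ih =>
    have hg_inv := (hg.of_le (m := n) (mod_cast n.le_succ)).mul_ofReal_inv
    obtain ⟨φ, hφ, hφc, hφ₀, hφ_le⟩ := ih hg.deriv
    obtain ⟨ψ, hψ, hψc, hψ₀, hψ_le⟩ := ih hg_inv
    refine ⟨φ + ψ, hφ.add hψ, hφc.add hψc, add_nonneg hφ₀ hψ₀, fun s hs u => ?_⟩
    rw [iteratedDeriv_succ', deriv_mul_cpow (N := n) hg s,
      iteratedDeriv_fun_add (hg.deriv.mul_cpow s).contDiff.contDiffAt
        (contDiff_const.mul (hg_inv.mul_cpow s).contDiff).contDiffAt,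
      iteratedDeriv_const_mul_field]
    calc _ ≤ φ u * (1 + ‖s‖) ^ n + ‖s‖ * (ψ u * (1 + ‖s‖) ^ n) := by
          refine (norm_add_le _ _).trans ?_
          rw [norm_mul]
          gcongr
          exacts [hφ_le s hs u, hψ_le s hs u]
      _ ≤ φ u * (1 + ‖s‖) ^ n * (1 + ‖s‖) + (1 + ‖s‖) * (ψ u * (1 + ‖s‖) ^ n) := by
          have hφu : 0 ≤ φ u := hφ₀ u
          have hψu : 0 ≤ ψ u := hψ₀ u
          exact add_le_add (le_mul_of_one_le_right (by positivity) (by simp))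
            (mul_le_mul_of_nonneg_right (by simp) (by positivity))
      _ = (φ + ψ) u * (1 + ‖s‖) ^ (n + 1) := by
          rw [Pi.add_apply]
          ring

theorem exists_integral_pow_mul_norm_iteratedFDeriv_mul_cpow_le
    (hg : IsTestFunctionOn n (Ioi 0) g) (r : ℝ) (k : ℕ) :
    ∃ C : ℝ, 0 ≤ C ∧ ∀ s : ℂ, s.re = r →
      ∫ u, ‖u‖ ^ k * ‖iteratedFDeriv ℝ n (fun u => g u * (u : ℂ) ^ s) u‖ ≤
        C * (1 + ‖s‖) ^ n := by
  obtain ⟨φ, hφ, hφc, hφ₀, hφ_le⟩ := hg.exists_norm_iteratedDeriv_mul_cpow_le r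
  have hφ_int : Integrable fun u : ℝ => ‖u‖ ^ k * φ u :=
    ((continuous_norm.pow k).mul hφ).integrable_of_hasCompactSupport hφc.mul_left
  refine ⟨∫ u, ‖u‖ ^ k * φ u,
    integral_nonneg fun u => mul_nonneg (by positivity) (hφ₀ u), fun s hs => ?_⟩
  rw [← integral_mul_const]
  refine integral_mono ((hg.mul_cpow s).integrable_pow_mul_norm_iteratedFDeriv k le_rfl)
    (hφ_int.mul_const _) fun u => ?_
  rw [norm_iteratedFDeriv_eq_norm_iteratedDeriv, mul_assoc]
  gcongr
  exact hφ_le s hs u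

theorem exists_pow_mul_norm_iteratedDeriv_fourier_mul_cpow_le
    (hg : IsTestFunctionOn n (Ioi 0) g) (r : ℝ) (j : ℕ) :
    ∃ C : ℝ, ∀ s : ℂ, s.re = r → ∀ x : ℝ,
      |x| ^ n * ‖iteratedDeriv j (𝓕 fun u => g u * (u : ℂ) ^ s) x‖ ≤ C * (1 + ‖s‖) ^ n := by
  choose! C hC₀ hC using fun (k l : ℕ) (hl : l ≤ n) =>
    (hg.of_le (mod_cast hl)).exists_integral_pow_mul_norm_iteratedFDeriv_mul_cpow_le r k
  refine ⟨(2 * Real.pi) ^ j * (2 * j + 2) ^ n *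
    ∑ p ∈ Finset.range (j + 1) ×ˢ Finset.range (n + 1), C p.1 p.2, fun s hs x => ?_⟩
  have hF := hg.mul_cpow s
  have fourier_le := Real.pow_mul_norm_iteratedFDeriv_fourier_le (K := j) (N := n) hF.contDiff
    (fun k l _ hl => hF.integrable_pow_mul_norm_iteratedFDeriv k (mod_cast hl)) le_rfl le_rfl x
  rw [norm_iteratedFDeriv_eq_norm_iteratedDeriv, Real.norm_eq_abs] at fourier_le
  refine fourier_le.trans ?_
  rw [mul_assoc _ (Finset.sum _ _), Finset.sum_mul]
  gcongr with p hp
  have hp₂ : p.2 ≤ n := Finset.mem_range_succ_iff.1 (Finset.mem_product.1 hp).2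
  refine (hC p.1 p.2 hp₂ s hs).trans ?_
  have hCp : 0 ≤ C p.1 p.2 := hC₀ p.1 p.2 hp₂
  gcongr
  simp

end IsTestFunctionOn

end ComplexPowers

section CosineTransform

/-- The (unnormalised) cosine transform `v ↦ ∫ F(u) cos(uv) du` over the whole real line. -/
noncomputable def cosTransform (F : ℝ → ℂ) (v : ℝ) : ℂ :=
  ∫ u, F u * (Real.cos (u * v) : ℂ)

theorem cosTransform_eq_fourier {F : ℝ → ℂ} (hF : Integrable F) :
    cosTransform F = fun v =>
      (2 : ℂ)⁻¹ * (𝓕 F ((2 * Real.pi)⁻¹ * v) + 𝓕 F (-(2 * Real.pi)⁻¹ * v)) := by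
  ext v
  have integrable_kernel (x : ℝ) :
      Integrable fun u : ℝ => Complex.exp (↑(-2 * Real.pi * u * x) * Complex.I) • F u :=
    hF.bdd_smul 1 (by fun_prop)
      (Eventually.of_forall fun u => (Complex.norm_exp_ofReal_mul_I _).le)
  rw [cosTransform, Real.fourier_real_eq_integral_exp_smul, Real.fourier_real_eq_integral_exp_smul,
    ← integral_add (integrable_kernel _) (integrable_kernel _), ← integral_const_mul]
  congr 1
  ext u
  have phase_pos : -2 * Real.pi * u * ((2 * Real.pi)⁻¹ * v) = -(u * v) := by field_simp
  have phase_neg : -2 * Real.pi * u * (-(2 * Real.pi)⁻¹ * v) = u * v := by field_simp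
  rw [phase_pos, phase_neg, Complex.ofReal_cos, Complex.cos]
  push_cast
  simp only [smul_eq_mul]
  ring

theorem iteratedDeriv_cosTransform {F : ℝ → ℂ} {j : ℕ}
    (hF : ∀ k ≤ j, Integrable fun u => u ^ k • F u) (v : ℝ) :
    iteratedDeriv j (cosTransform F) v = (2 : ℂ)⁻¹ *
      ((2 * Real.pi)⁻¹ ^ j • iteratedDeriv j (𝓕 F) ((2 * Real.pi)⁻¹ * v) +
        (-(2 * Real.pi)⁻¹) ^ j • iteratedDeriv j (𝓕 F) (-(2 * Real.pi)⁻¹ * v)) := by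
  have contDiff_fourier : ContDiff ℝ j (𝓕 F) :=
    Real.contDiff_fourier (N := j) fun k hk => by
      simpa [norm_smul] using (hF k (mod_cast hk)).norm
  have contDiff_scaled (c : ℝ) : ContDiff ℝ j fun v : ℝ => 𝓕 F (c * v) :=
    contDiff_fourier.comp (contDiff_const.mul contDiff_id)
  have integrable_F : Integrable F := by simpa using hF 0 j.zero_le
  rw [cosTransform_eq_fourier integrable_F, iteratedDeriv_const_mul_field,
    iteratedDeriv_fun_add (contDiff_scaled _).contDiffAt (contDiff_scaled _).contDiffAt,
    iteratedDeriv_comp_const_smul contDiff_fourier, iteratedDeriv_comp_const_smul contDiff_fourier]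

theorem pow_mul_norm_iteratedDeriv_cosTransform_le {F : ℝ → ℂ} {j A : ℕ} {B : ℝ}
    (hF : ∀ k ≤ j, Integrable fun u => u ^ k • F u)
    (hB : ∀ x, |x| ^ A * ‖iteratedDeriv j (𝓕 F) x‖ ≤ B) (v : ℝ) :
    |v| ^ A * ‖iteratedDeriv j (cosTransform F) v‖ ≤
      (2 * Real.pi) ^ A * (2 * Real.pi)⁻¹ ^ j * B := by
  have bound_scaled (c : ℝ) (hc : |c| = (2 * Real.pi)⁻¹) :
      |v| ^ A * ‖c ^ j • iteratedDeriv j (𝓕 F) (c * v)‖ ≤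
        (2 * Real.pi) ^ A * (2 * Real.pi)⁻¹ ^ j * B := by
    have hv : |v| = 2 * Real.pi * |c * v| := by
      rw [abs_mul, hc, mul_inv_cancel_left₀ Real.two_pi_pos.ne']
    calc |v| ^ A * ‖c ^ j • iteratedDeriv j (𝓕 F) (c * v)‖
        = (2 * Real.pi) ^ A * (2 * Real.pi)⁻¹ ^ j *
            (|c * v| ^ A * ‖iteratedDeriv j (𝓕 F) (c * v)‖) := by
          rw [norm_smul, norm_pow, Real.norm_eq_abs, hc, hv, mul_pow]
          ring
      _ ≤ _ := by
          gcongr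
          exact hB _
  have abs_inv : |(2 * Real.pi)⁻¹| = (2 * Real.pi)⁻¹ := abs_of_pos (by positivity)
  have bound_pos := bound_scaled _ abs_inv
  have bound_neg := bound_scaled (-(2 * Real.pi)⁻¹) (by rw [abs_neg, abs_inv])
  rw [iteratedDeriv_cosTransform hF, norm_mul, norm_inv, Complex.norm_ofNat]
  have triangle := mul_le_mul_of_nonneg_left
    (norm_add_le ((2 * Real.pi)⁻¹ ^ j • iteratedDeriv j (𝓕 F) ((2 * Real.pi)⁻¹ * v))
      ((-(2 * Real.pi)⁻¹) ^ j • iteratedDeriv j (𝓕 F) (-(2 * Real.pi)⁻¹ * v)))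
    (pow_nonneg (abs_nonneg v) A)
  linarith

theorem IsTestFunctionOn.exists_pow_mul_norm_iteratedDeriv_cosTransform_mul_cpow_le
    {n : ℕ} {g : ℝ → ℂ} (hg : IsTestFunctionOn n (Ioi 0) g) (r : ℝ) (j : ℕ) :
    ∃ C : ℝ, ∀ s : ℂ, s.re = r → ∀ v : ℝ,
      |v| ^ n * ‖iteratedDeriv j (cosTransform fun u => g u * (u : ℂ) ^ s) v‖ ≤
        C * (1 + ‖s‖) ^ n := by
  obtain ⟨C, hC⟩ := hg.exists_pow_mul_norm_iteratedDeriv_fourier_mul_cpow_le r j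
  refine ⟨(2 * Real.pi) ^ n * (2 * Real.pi)⁻¹ ^ j * C, fun s hs v => ?_⟩
  have hF := hg.mul_cpow s
  rw [mul_assoc _ C]
  exact pow_mul_norm_iteratedDeriv_cosTransform_le (fun k _ =>
    ((continuous_pow k).smul hF.contDiff.continuous).integrable_of_hasCompactSupport
      hF.hasCompactSupport.smul_left) (hC s hs) v

end CosineTransform

section Amplitude

theorem IsTestFunctionOn.comp_sqrt {F : Type*} [NormedAddCommGroup F] [NormedSpace ℝ F]
    {n : ℕ∞ω} {h : ℝ → F} (hh : IsTestFunctionOn n (Ioi 0) h) :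
    IsTestFunctionOn n (Ioi 0) fun u => h (Real.sqrt u) := by
  have isCompact_sq : IsCompact ((· ^ 2) '' tsupport h) :=
    hh.hasCompactSupport.isCompact.image (continuous_pow 2)
  have support_subset : Function.support (fun u => h (Real.sqrt u)) ⊆ (· ^ 2) '' tsupport h := by
    intro u hu
    have hu_mem : Real.sqrt u ∈ tsupport h := subset_tsupport h hu
    exact ⟨_, hu_mem, Real.sq_sqrt (Real.sqrt_pos.1 (hh.tsupport_subset hu_mem)).le⟩
  have tsupport_subset : tsupport (fun u => h (Real.sqrt u)) ⊆ Ioi 0 := by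
    refine (closure_minimal support_subset isCompact_sq.isClosed).trans ?_
    rintro _ ⟨x, hx, rfl⟩
    exact pow_pos (mem_Ioi.1 (hh.tsupport_subset hx)) 2
  exact ⟨contDiff_of_tsupport fun u hu =>
      hh.contDiff.contDiffAt.comp u (Real.contDiffAt_sqrt (tsupport_subset hu).ne'),
    .of_support_subset_isCompact isCompact_sq support_subset, tsupport_subset⟩

/-- The factor `h(√u) (2πu)^{−1/2}` of the integrand of `ħ^ℜ_w`, which carries no dependence on
`w`. For `u ≤ 0` it vanishes, because `√(2πu) = 0` and `1 / 0 = 0`. -/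
noncomputable def hbarAmplitude (h : ℝ → ℂ) (u : ℝ) : ℂ :=
  h (Real.sqrt u) * ((1 / Real.sqrt (2 * Real.pi * u) : ℝ) : ℂ)

theorem hbarAmplitude_of_nonpos (h : ℝ → ℂ) {u : ℝ} (hu : u ≤ 0) : hbarAmplitude h u = 0 := by
  simp [hbarAmplitude,
    Real.sqrt_eq_zero_of_nonpos (mul_nonpos_of_nonneg_of_nonpos Real.two_pi_pos.le hu)]

theorem IsTestFunctionOn.hbarAmplitude {n : ℕ∞ω} {h : ℝ → ℂ}
    (hh : IsTestFunctionOn n (Ioi 0) h) : IsTestFunctionOn n (Ioi 0) (hbarAmplitude h) := by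
  refine hh.comp_sqrt.mul fun u hu => Complex.ofRealCLM.contDiff.contDiffAt.comp u ?_
  have two_pi_mul_pos : 0 < 2 * Real.pi * u := mul_pos Real.two_pi_pos hu
  exact contDiffAt_const.div ((contDiffAt_const.mul contDiffAt_id).sqrt two_pi_mul_pos.ne')
    (Real.sqrt_pos.2 two_pi_mul_pos).ne'

theorem hbarRe_eq_cosTransform (h : ℝ → ℂ) (w : ℂ) :
    hbarRe h w = cosTransform fun u => hbarAmplitude h u * (u : ℂ) ^ (w / 2) := by
  ext v
  refine setIntegral_eq_integral_of_forall_compl_eq_zero (f := fun u : ℝ =>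
    hbarAmplitude h u * (u : ℂ) ^ (w / 2) * (Real.cos (u * v) : ℂ)) fun u hu => ?_
  simp [hbarAmplitude_of_nonpos h (not_lt.1 hu)]

end Amplitude

theorem hbarRe_iteratedDeriv_rapid_decay_general
    (h : ℝ → ℂ) (A : ℕ) (hsm : ContDiff ℝ A h) (hcs : HasCompactSupport h)
    (hsupp : tsupport h ⊆ Ioi 0) (r : ℝ) (j : ℕ) :
    ∃ C : ℝ, ∀ w : ℂ, w.re = r → ∀ v : ℝ, v ≠ 0 →
      ‖iteratedDeriv j (hbarRe h w) v‖ ≤ C * (1 + ‖w‖) ^ (A : ℝ) * |v| ^ (-(A : ℝ)) := by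
  have hg := IsTestFunctionOn.hbarAmplitude ⟨hsm, hcs, hsupp⟩
  obtain ⟨C, hC⟩ := hg.exists_pow_mul_norm_iteratedDeriv_cosTransform_mul_cpow_le (r / 2) j
  have hC₀ : 0 ≤ C := by
    have bound_nonneg : 0 ≤ C * (1 + ‖((r / 2 : ℝ) : ℂ)‖) ^ A :=
      le_trans (by positivity) (hC _ (Complex.ofReal_re _) 0)
    exact nonneg_of_mul_nonneg_left bound_nonneg (by positivity)
  refine ⟨C, fun w hw v hv => ?_⟩
  have norm_half_le : ‖w / 2‖ ≤ ‖w‖ := by simp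
  rw [Real.rpow_neg (abs_nonneg v), Real.rpow_natCast, Real.rpow_natCast, ← div_eq_mul_inv,
    le_div_iff₀' (pow_pos (abs_pos.2 hv) A), hbarRe_eq_cosTransform]
  calc _ ≤ C * (1 + ‖w / 2‖) ^ A := hC (w / 2) (by simp [hw]) v
    _ ≤ C * (1 + ‖w‖) ^ A := by gcongr

/-- For smooth `h` with compact support in `(0,∞)` and any `w ∈ ℂ`, all derivatives
of `ħ^ℜ_w` decay rapidly: for all `j, A ≥ 0` there is a constant `C` depending only
on `h`, `Re(w)`, `j` and `A` such that
`|(d/dv)^j ħ^ℜ_w(v)| ≤ C (1+|w|)^A v^{−A}` for all `v > 0`. -/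
theorem hbarRe_iteratedDeriv_rapid_decay
    (h : ℝ → ℂ) (hsm : ContDiff ℝ (⊤ : ℕ∞) h) (hcs : HasCompactSupport h)
    (hsupp : tsupport h ⊆ Set.Ioi 0) :
    ∀ (r : ℝ) (j A : ℕ), ∃ C : ℝ, ∀ w : ℂ, w.re = r → ∀ v : ℝ, 0 < v →
      ‖iteratedDeriv j (hbarRe h w) v‖ ≤ C * (1 + ‖w‖) ^ (A : ℝ) * v ^ (-(A : ℝ)) := by
  intro r j A
  obtain ⟨C, hC⟩ := hbarRe_iteratedDeriv_rapid_decay_general h A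
    (hsm.of_le (mod_cast le_top)) hcs hsupp r j
  exact ⟨C, fun w hw v hv => by simpa only [abs_of_pos hv] using hC w hw v hv.ne'⟩
end

section
/- Let m₁, m₂, n₂ > 0 be real, let v ∈ ℝ satisfy D := (v+m₂)² + 4v·n₂ > 0 and 2n₂ + m₂ + v > 0, and define f(x) = 2√(x(x+m₁)·n₂(n₂+m₂)) − 2x·n₂ − x·m₂ − n₂·m₁ for x > 0. Then the point x* := m₁·(m₂ + 2n₂ + v − √D)/(2√D) is positive, and the function x ↦ f(x) − v·x has vanishing derivative at x = x*, i.e. f'(x*) = v. -/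
/-!
Put `b = m₂ + 2n₂ + v` and `c = n₂(n₂ + m₂)`. Then `D = b² − 4c`, and `f'(x) = v` says that
`x ↦ 2√(x(x + m₁)c)` has slope `b` at `x`. With `s = √D`, the numbers `x*` and `x* + m₁` are
`m₁(b ∓ s)/(2s)`, whose product is `m₁²c/s²`; hence the square root is the rational expression
`m₁c/s` at `x*`, and the slope there can be read off.
-/

/-- The point at which `x ↦ 2√(x(x + m)c)` has slope `b`. It is written in terms of the square
root `s > 0` of `b² - 4c`, so that its properties are algebraic consequences of `s² = b² - 4c`. -/
noncomputable def slopePoint (m b s : ℝ) : ℝ :=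
  m * (b - s) / (2 * s)

section SlopePoint

variable {m b c s : ℝ}

theorem slopePoint_pos_iff_lt (hm : 0 < m) (hs : 0 < s) : 0 < slopePoint m b s ↔ s < b := by
  rw [slopePoint, div_pos_iff_of_pos_right (by positivity), mul_pos_iff_of_pos_left hm, sub_pos]

theorem slopePoint_pos_iff (hm : 0 < m) (hs : 0 < s) (hsb : s ^ 2 < b ^ 2) :
    0 < slopePoint m b s ↔ 0 < b := by
  rw [slopePoint_pos_iff_lt hm hs]
  exact ⟨hs.trans, fun hb ↦ lt_of_pow_lt_pow_left₀ 2 hb.le hsb⟩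

theorem two_mul_slopePoint_add (hs : s ≠ 0) : 2 * slopePoint m b s + m = m * b / s := by
  rw [slopePoint]
  field_simp
  ring

theorem slopePoint_mul_add_mul (hs : s ≠ 0) (hsq : s ^ 2 = b ^ 2 - 4 * c) :
    slopePoint m b s * (slopePoint m b s + m) * c = (m * c / s) ^ 2 := by
  have conj : slopePoint m b s + m = m * (b + s) / (2 * s) := by
    rw [slopePoint]
    field_simp
    ring
  rw [conj, slopePoint]
  field_simp
  linear_combination -m ^ 2 * c * hsq

theorem sqrt_slopePoint_mul_add_mul (hs : 0 < s) (hmc : 0 < m * c)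
    (hsq : s ^ 2 = b ^ 2 - 4 * c) :
    √(slopePoint m b s * (slopePoint m b s + m) * c) = m * c / s := by
  rw [slopePoint_mul_add_mul hs.ne' hsq, Real.sqrt_sq (by positivity)]

theorem hasDerivAt_two_mul_sqrt_mul_add_mul {x : ℝ} (hx : x * (x + m) * c ≠ 0) :
    HasDerivAt (fun y ↦ 2 * √(y * (y + m) * c)) ((2 * x + m) * c / √(x * (x + m) * c)) x := by
  have quadratic : HasDerivAt (fun y ↦ y * (y + m) * c) ((2 * x + m) * c) x :=
    (((hasDerivAt_id' x).fun_mul ((hasDerivAt_id' x).add_const m)).mul_const c).congr_deriv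
      (by ring)
  exact ((quadratic.sqrt hx).const_mul 2).congr_deriv (by ring)

theorem hasDerivAt_two_mul_sqrt_slopePoint (hs : 0 < s) (hmc : 0 < m * c)
    (hsq : s ^ 2 = b ^ 2 - 4 * c) :
    HasDerivAt (fun x ↦ 2 * √(x * (x + m) * c)) b (slopePoint m b s) := by
  have radicand_ne : slopePoint m b s * (slopePoint m b s + m) * c ≠ 0 := by
    rw [slopePoint_mul_add_mul hs.ne' hsq]
    positivity
  have hm : m ≠ 0 := left_ne_zero_of_mul hmc.ne'
  have hc : c ≠ 0 := right_ne_zero_of_mul hmc.ne'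
  refine (hasDerivAt_two_mul_sqrt_mul_add_mul radicand_ne).congr_deriv ?_
  rw [sqrt_slopePoint_mul_add_mul hs hmc hsq, two_mul_slopePoint_add hs.ne']
  field_simp

end SlopePoint

theorem phase_stationary_point_general (m₁ m₂ n₂ v : ℝ) (hm₁ : 0 < m₁)
    (hc : 0 < n₂ * (n₂ + m₂)) (hD : 0 < (v + m₂) ^ 2 + 4 * v * n₂) :
    (0 < m₁ * (m₂ + 2 * n₂ + v - √((v + m₂) ^ 2 + 4 * v * n₂)) /
        (2 * √((v + m₂) ^ 2 + 4 * v * n₂)) ↔ 0 < 2 * n₂ + m₂ + v) ∧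
    HasDerivAt
      (fun x : ℝ ↦ 2 * √(x * (x + m₁) * (n₂ * (n₂ + m₂))) - 2 * x * n₂ - x * m₂ - n₂ * m₁)
      v
      (m₁ * (m₂ + 2 * n₂ + v - √((v + m₂) ^ 2 + 4 * v * n₂)) /
        (2 * √((v + m₂) ^ 2 + 4 * v * n₂))) := by
  set s := √((v + m₂) ^ 2 + 4 * v * n₂)
  have hs : 0 < s := Real.sqrt_pos.mpr hD
  have hsq : s ^ 2 = (m₂ + 2 * n₂ + v) ^ 2 - 4 * (n₂ * (n₂ + m₂)) := by
    rw [Real.sq_sqrt hD.le]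
    ring
  rw [← slopePoint, add_comm (2 * n₂)]
  refine ⟨slopePoint_pos_iff hm₁ hs (by linarith), ?_⟩
  have slope := hasDerivAt_two_mul_sqrt_slopePoint hs (mul_pos hm₁ hc) hsq
  have hid := hasDerivAt_id' (slopePoint m₁ (m₂ + 2 * n₂ + v) s)
  exact (((slope.sub ((hid.const_mul 2).mul_const n₂)).sub (hid.mul_const m₂)).sub_const
    (n₂ * m₁)).congr_deriv (by ring)

/-- The stationary point of the phase `f(x) − v x`, where
`f(x) = 2√(x(x+m₁) n₂(n₂+m₂)) − 2x n₂ − x m₂ − n₂ m₁`: under the conditions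
`D = (v+m₂)² + 4v n₂ > 0` and `2n₂ + m₂ + v > 0`, the point
`x* = m₁ (m₂ + 2n₂ + v − √D)/(2√D)` is positive and `f'(x*) = v`. -/
theorem phase_stationary_point (m₁ m₂ n₂ v : ℝ) (hm₁ : 0 < m₁) (hm₂ : 0 < m₂)
    (hn₂ : 0 < n₂) (hD : 0 < (v + m₂) ^ 2 + 4 * v * n₂)
    (hpos : 0 < 2 * n₂ + m₂ + v) :
    0 < m₁ * (m₂ + 2 * n₂ + v - Real.sqrt ((v + m₂) ^ 2 + 4 * v * n₂)) /
        (2 * Real.sqrt ((v + m₂) ^ 2 + 4 * v * n₂)) ∧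
    HasDerivAt
      (fun x : ℝ =>
        2 * Real.sqrt (x * (x + m₁) * (n₂ * (n₂ + m₂))) - 2 * x * n₂ - x * m₂ - n₂ * m₁)
      v
      (m₁ * (m₂ + 2 * n₂ + v - Real.sqrt ((v + m₂) ^ 2 + 4 * v * n₂)) /
        (2 * Real.sqrt ((v + m₂) ^ 2 + 4 * v * n₂))) := by
  obtain ⟨pos_iff, has_slope⟩ := phase_stationary_point_general m₁ m₂ n₂ v hm₁ (by positivity) hD
  exact ⟨pos_iff.mpr hpos, has_slope⟩
end

section
/- Let m₁, m₂, n₂ > 0 be real, let v ∈ ℝ satisfy D := (v+m₂)² + 4v·n₂ > 0 and 2n₂ + m₂ + v > 0, define f(x) = 2√(x(x+m₁)·n₂(n₂+m₂)) − 2x·n₂ − x·m₂ − n₂·m₁ for x > 0, and let x* := m₁·(m₂ + 2n₂ + v − √D)/(2√D). Then the value of the phase at the stationary point is f(x*) − v·x* = (m₁/2)·(v + m₂ − √D). -/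
/-!
Put `a = m₂ + 2n₂ + v` and `q = n₂(n₂ + m₂)`. Then `D = a² − 4q` and
`f(x) − v x = 2√(x(x + m₁) q) − a x − n₂ m₁`. Since `x*` and `x* + m₁` equal
`m₁(a ∓ √D)/(2√D)` and `(a − √D)(a + √D) = 4q`, the radicand at `x*` is the perfect square
`(m₁ q/√D)²`.
-/

section Field

variable {K : Type*} [Field K]

/-- The stationary point of `x ↦ 2√(x(x + m) q) − a x`, expressed through `s = √(a² − 4q)`
instead of `q`, which makes it a rational function of its parameters. -/
def stationaryPoint (m a s : K) : K :=
  m * (a - s) / (2 * s)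

variable [NeZero (2 : K)] {a q s : K}

theorem stationaryPoint_add_self (m a : K) (hs : s ≠ 0) :
    stationaryPoint m a s + m = m * (a + s) / (2 * s) := by
  have h2 : (2 : K) ≠ 0 := two_ne_zero
  rw [stationaryPoint]
  field_simp
  ring

theorem stationaryPoint_mul_add_self_mul (m : K) (hs : s ≠ 0) (hsq : s ^ 2 = a ^ 2 - 4 * q) :
    stationaryPoint m a s * (stationaryPoint m a s + m) * q = (m * q / s) ^ 2 := by
  have h2 : (2 : K) ≠ 0 := two_ne_zero
  have vieta : (a - s) * (a + s) = 2 ^ 2 * q := by linear_combination -hsq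
  calc stationaryPoint m a s * (stationaryPoint m a s + m) * q
      = m ^ 2 * ((a - s) * (a + s)) * q / (2 * s) ^ 2 := by
        rw [stationaryPoint_add_self m a hs, stationaryPoint]
        field_simp
    _ = (m * q / s) ^ 2 := by
        rw [vieta]
        field_simp

theorem two_mul_sub_mul_stationaryPoint (m : K) (hs : s ≠ 0) (hsq : s ^ 2 = a ^ 2 - 4 * q) :
    2 * (m * q / s) - a * stationaryPoint m a s = m / 2 * (a - s) := by
  have h2 : (2 : K) ≠ 0 := two_ne_zero
  rw [stationaryPoint]
  field_simp
  linear_combination m * hsq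

end Field

theorem two_mul_sqrt_sub_mul_stationaryPoint {m a q s : ℝ} (hs : 0 < s)
    (hsq : s ^ 2 = a ^ 2 - 4 * q) (hmq : 0 ≤ m * q) :
    2 * √(stationaryPoint m a s * (stationaryPoint m a s + m) * q) - a * stationaryPoint m a s =
      m / 2 * (a - s) := by
  rw [stationaryPoint_mul_add_self_mul m hs.ne' hsq, Real.sqrt_sq (div_nonneg hmq hs.le),
    two_mul_sub_mul_stationaryPoint m hs.ne' hsq]

/-- The phase function `f` of the off-diagonal analysis. -/
noncomputable def phase (m₁ m₂ n₂ x : ℝ) : ℝ :=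
  2 * √(x * (x + m₁) * (n₂ * (n₂ + m₂))) - 2 * x * n₂ - x * m₂ - n₂ * m₁

/-- The quantity `D` attached to the slope `v`, whose square root enters the stationary point of
`f(x) − v x`. -/
def phaseDiscrim {R : Type*} [CommRing R] (m₂ n₂ v : R) : R :=
  (v + m₂) ^ 2 + 4 * v * n₂

theorem phaseDiscrim_eq_sq_sub {R : Type*} [CommRing R] (m₂ n₂ v : R) :
    phaseDiscrim m₂ n₂ v = (m₂ + 2 * n₂ + v) ^ 2 - 4 * (n₂ * (n₂ + m₂)) := by
  rw [phaseDiscrim]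
  ring

theorem phase_sub_mul (m₁ m₂ n₂ v x : ℝ) :
    phase m₁ m₂ n₂ x - v * x =
      2 * √(x * (x + m₁) * (n₂ * (n₂ + m₂))) - (m₂ + 2 * n₂ + v) * x - n₂ * m₁ := by
  rw [phase]
  ring

theorem phase_value_at_stationary_point_general {m₁ m₂ n₂ v : ℝ}
    (hmq : 0 ≤ m₁ * (n₂ * (n₂ + m₂))) (hD : 0 < phaseDiscrim m₂ n₂ v) :
    phase m₁ m₂ n₂ (stationaryPoint m₁ (m₂ + 2 * n₂ + v) √(phaseDiscrim m₂ n₂ v)) -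
        v * stationaryPoint m₁ (m₂ + 2 * n₂ + v) √(phaseDiscrim m₂ n₂ v) =
      m₁ / 2 * (v + m₂ - √(phaseDiscrim m₂ n₂ v)) := by
  have hsq : √(phaseDiscrim m₂ n₂ v) ^ 2 = (m₂ + 2 * n₂ + v) ^ 2 - 4 * (n₂ * (n₂ + m₂)) := by
    rw [Real.sq_sqrt hD.le, phaseDiscrim_eq_sq_sub]
  rw [phase_sub_mul, two_mul_sqrt_sub_mul_stationaryPoint (Real.sqrt_pos.mpr hD) hsq hmq]
  ring

/-- Value of the phase `f(x) − v x` at its stationary point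
`x* = m₁ (m₂ + 2n₂ + v − √D)/(2√D)`, where
`f(x) = 2√(x(x+m₁) n₂(n₂+m₂)) − 2x n₂ − x m₂ − n₂ m₁` and `D = (v+m₂)² + 4v n₂`:
`f(x*) − v x* = (m₁/2)(v + m₂ − √D)`. -/
theorem phase_value_at_stationary_point (m₁ m₂ n₂ v : ℝ) (hm₁ : 0 < m₁)
    (hm₂ : 0 < m₂) (hn₂ : 0 < n₂) (hD : 0 < (v + m₂) ^ 2 + 4 * v * n₂)
    (hpos : 0 < 2 * n₂ + m₂ + v) :
    (fun x : ℝ =>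
        2 * Real.sqrt (x * (x + m₁) * (n₂ * (n₂ + m₂))) - 2 * x * n₂ - x * m₂ - n₂ * m₁)
      (m₁ * (m₂ + 2 * n₂ + v - Real.sqrt ((v + m₂) ^ 2 + 4 * v * n₂)) /
        (2 * Real.sqrt ((v + m₂) ^ 2 + 4 * v * n₂))) -
      v * (m₁ * (m₂ + 2 * n₂ + v - Real.sqrt ((v + m₂) ^ 2 + 4 * v * n₂)) /
        (2 * Real.sqrt ((v + m₂) ^ 2 + 4 * v * n₂))) =
      (m₁ / 2) * (v + m₂ - Real.sqrt ((v + m₂) ^ 2 + 4 * v * n₂)) :=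
  phase_value_at_stationary_point_general (by positivity) hD
end

section
/- Let m₁, m₂, n₂ > 0 be real, let v ∈ ℝ satisfy D := (v+m₂)² + 4v·n₂ > 0 and 2n₂ + m₂ + v > 0, define f(x) = 2√(x(x+m₁)·n₂(n₂+m₂)) − 2x·n₂ − x·m₂ − n₂·m₁ for x > 0, and let x* := m₁·(m₂ + 2n₂ + v − √D)/(2√D). Then the second derivative of f at the stationary point equals f''(x*) = −D^{3/2}/(2·m₁·n₂·(n₂+m₂)). -/
/-!
Up to an affine summand, the phase is `2√q` with `q` a quadratic polynomial, and
`(√q)'' = -disc q / (4 q^{3/2})`, so the second derivative depends on the point only through `√q`.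
Put `A = m₂ + 2n₂ + v`. Since `A² - D = 4 n₂(n₂+m₂)` and
`x*(x* + m₁) = m₁² (A² - D) / (4D)`, the radicand at `x*` is the square of `m₁ n₂(n₂+m₂) / √D`.
-/

section SqrtQuadratic

variable {a b c x : ℝ}

theorem hasDerivAt_quadratic (a b c x : ℝ) :
    HasDerivAt (fun y : ℝ => a * y ^ 2 + b * y + c) (2 * a * x + b) x := by
  have h := (((hasDerivAt_pow 2 x).const_mul a).add ((hasDerivAt_id' x).const_mul b)).add_const c
  exact h.congr_deriv (by push_cast; ring)

theorem hasDerivAt_sqrt_quadratic (hx : 0 < a * x ^ 2 + b * x + c) :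
    HasDerivAt (fun y : ℝ => √(a * y ^ 2 + b * y + c))
      ((2 * a * x + b) / (2 * √(a * x ^ 2 + b * x + c))) x :=
  (hasDerivAt_quadratic a b c x).sqrt hx.ne'

theorem hasDerivAt_deriv_sqrt_quadratic (hx : 0 < a * x ^ 2 + b * x + c) :
    HasDerivAt (fun y : ℝ => (2 * a * y + b) / (2 * √(a * y ^ 2 + b * y + c)))
      (-discrim a b c / (4 * √(a * x ^ 2 + b * x + c) ^ 3)) x := by
  have hsqrt_ne : √(a * x ^ 2 + b * x + c) ≠ 0 := (Real.sqrt_pos.mpr hx).ne'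
  have hsq : √(a * x ^ 2 + b * x + c) ^ 2 = a * x ^ 2 + b * x + c := Real.sq_sqrt hx.le
  have hnum : HasDerivAt (fun y : ℝ => 2 * a * y + b) (2 * a) x := by
    simpa only [mul_one] using ((hasDerivAt_id' x).const_mul (2 * a)).add_const b
  refine (hnum.div ((hasDerivAt_sqrt_quadratic hx).const_mul 2)
    (mul_ne_zero two_ne_zero hsqrt_ne)).congr_deriv ?_
  generalize √(a * x ^ 2 + b * x + c) = r at hsqrt_ne hsq ⊢
  rw [discrim]
  field_simp
  linear_combination 16 * a * hsq

theorem iteratedDeriv_two_sqrt_quadratic (hx : 0 < a * x ^ 2 + b * x + c) :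
    iteratedDeriv 2 (fun y : ℝ => √(a * y ^ 2 + b * y + c)) x =
      -discrim a b c / (4 * √(a * x ^ 2 + b * x + c) ^ 3) := by
  have hpos_near : ∀ᶠ y in nhds x, 0 < a * y ^ 2 + b * y + c :=
    (hasDerivAt_quadratic a b c x).continuousAt.eventually (lt_mem_nhds hx)
  have hderiv : deriv (fun y : ℝ => √(a * y ^ 2 + b * y + c)) =ᶠ[nhds x]
      fun y => (2 * a * y + b) / (2 * √(a * y ^ 2 + b * y + c)) :=
    hpos_near.mono fun _ hy => (hasDerivAt_sqrt_quadratic hy).deriv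
  rw [iteratedDeriv_succ, iteratedDeriv_one, hderiv.deriv_eq,
    (hasDerivAt_deriv_sqrt_quadratic hx).deriv]

end SqrtQuadratic

theorem iteratedDeriv_two_add_affine {𝕜 : Type*} [NontriviallyNormedField 𝕜] {g : 𝕜 → 𝕜} {x : 𝕜}
    (hg : ContDiffAt 𝕜 2 g x) (p r : 𝕜) :
    iteratedDeriv 2 (fun y => g y + (p * y + r)) x = iteratedDeriv 2 g x := by
  have haffine : iteratedDeriv 2 (fun y : 𝕜 => p * y + r) x = 0 := by
    simp [iteratedDeriv_succ']
  rw [iteratedDeriv_fun_add hg (by fun_prop), haffine, add_zero]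

/-- The quantity `D`, where `v` is the slope subtracted from the phase in `f(x) - v * x`. -/
def phaseDisc (m₂ n₂ v : ℝ) : ℝ :=
  (v + m₂) ^ 2 + 4 * v * n₂

/-- The point `x*`. When `0 < phaseDisc m₂ n₂ v` and `0 < m₁ * n₂ * (n₂ + m₂)`, the derivative
of the phase at this point is `v`. -/
noncomputable def phasePoint (m₁ m₂ n₂ v : ℝ) : ℝ :=
  m₁ * (m₂ + 2 * n₂ + v - √(phaseDisc m₂ n₂ v)) / (2 * √(phaseDisc m₂ n₂ v))

section Phase

variable {m₁ m₂ n₂ v x : ℝ}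

theorem iteratedDeriv_two_phase (hx : 0 < x * (x + m₁) * (n₂ * (n₂ + m₂))) :
    iteratedDeriv 2 (phase m₁ m₂ n₂) x =
      -(m₁ * n₂ * (n₂ + m₂)) ^ 2 / (2 * √(x * (x + m₁) * (n₂ * (n₂ + m₂))) ^ 3) := by
  set c := n₂ * (n₂ + m₂) with hc
  have hquad (y : ℝ) : y * (y + m₁) * c = c * y ^ 2 + c * m₁ * y + 0 := by ring
  have hphase : phase m₁ m₂ n₂ = fun y =>
      2 * √(c * y ^ 2 + c * m₁ * y + 0) + (-(2 * n₂ + m₂) * y + -(n₂ * m₁)) := by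
    funext y
    rw [phase, ← hc, hquad]
    ring
  rw [hquad] at hx ⊢
  have hsmooth : ContDiffAt ℝ 2 (fun y : ℝ => √(c * y ^ 2 + c * m₁ * y + 0)) x :=
    ContDiffAt.sqrt (by fun_prop) hx.ne'
  rw [hphase, iteratedDeriv_two_add_affine (contDiffAt_const.mul hsmooth),
    iteratedDeriv_const_mul_field, iteratedDeriv_two_sqrt_quadratic hx, discrim, mul_assoc m₁, ← hc]
  ring

theorem phasePoint_mul_add (hD : 0 < phaseDisc m₂ n₂ v) :
    phasePoint m₁ m₂ n₂ v * (phasePoint m₁ m₂ n₂ v + m₁) =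
      m₁ ^ 2 * (n₂ * (n₂ + m₂)) / phaseDisc m₂ n₂ v := by
  have hsqrt_ne : √(phaseDisc m₂ n₂ v) ≠ 0 := (Real.sqrt_pos.mpr hD).ne'
  have hsq : √(phaseDisc m₂ n₂ v) ^ 2 = phaseDisc m₂ n₂ v := Real.sq_sqrt hD.le
  have hdiff : (m₂ + 2 * n₂ + v) ^ 2 - phaseDisc m₂ n₂ v = 4 * (n₂ * (n₂ + m₂)) := by
    rw [phaseDisc]
    ring
  calc phasePoint m₁ m₂ n₂ v * (phasePoint m₁ m₂ n₂ v + m₁)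
      = m₁ ^ 2 * ((m₂ + 2 * n₂ + v) ^ 2 - √(phaseDisc m₂ n₂ v) ^ 2) /
          (4 * √(phaseDisc m₂ n₂ v) ^ 2) := by
        rw [phasePoint]
        field_simp
        ring
    _ = m₁ ^ 2 * (n₂ * (n₂ + m₂)) / phaseDisc m₂ n₂ v := by
        rw [hsq, hdiff]
        field_simp

theorem phase_radicand_phasePoint (hD : 0 < phaseDisc m₂ n₂ v) :
    phasePoint m₁ m₂ n₂ v * (phasePoint m₁ m₂ n₂ v + m₁) * (n₂ * (n₂ + m₂)) =
      (|m₁ * n₂ * (n₂ + m₂)| / √(phaseDisc m₂ n₂ v)) ^ 2 := by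
  rw [phasePoint_mul_add hD, div_pow, sq_abs, Real.sq_sqrt hD.le]
  ring

theorem phase_second_derivative_at_stationary_point_general
    (h : m₁ * n₂ * (n₂ + m₂) ≠ 0) (hD : 0 < phaseDisc m₂ n₂ v) :
    iteratedDeriv 2 (phase m₁ m₂ n₂) (phasePoint m₁ m₂ n₂ v) =
      -(phaseDisc m₂ n₂ v * √(phaseDisc m₂ n₂ v)) / (2 * |m₁ * n₂ * (n₂ + m₂)|) := by
  have hroot : 0 < |m₁ * n₂ * (n₂ + m₂)| / √(phaseDisc m₂ n₂ v) :=
    div_pos (abs_pos.mpr h) (Real.sqrt_pos.mpr hD)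
  have hsq : √(phaseDisc m₂ n₂ v) ^ 2 = phaseDisc m₂ n₂ v := Real.sq_sqrt hD.le
  have hradicand := phase_radicand_phasePoint (m₁ := m₁) hD
  calc iteratedDeriv 2 (phase m₁ m₂ n₂) (phasePoint m₁ m₂ n₂ v)
      = -(m₁ * n₂ * (n₂ + m₂)) ^ 2 /
          (2 * (|m₁ * n₂ * (n₂ + m₂)| / √(phaseDisc m₂ n₂ v)) ^ 3) := by
        rw [iteratedDeriv_two_phase (hradicand ▸ pow_pos hroot 2), hradicand,
          Real.sqrt_sq hroot.le]
    _ = -(√(phaseDisc m₂ n₂ v) ^ 2 * √(phaseDisc m₂ n₂ v)) /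
          (2 * |m₁ * n₂ * (n₂ + m₂)|) := by
        rw [← sq_abs]
        field_simp
    _ = -(phaseDisc m₂ n₂ v * √(phaseDisc m₂ n₂ v)) / (2 * |m₁ * n₂ * (n₂ + m₂)|) := by
        rw [hsq]

end Phase

/-- Second derivative of the phase
`f(x) = 2√(x(x+m₁) n₂(n₂+m₂)) − 2x n₂ − x m₂ − n₂ m₁` at the stationary point
`x* = m₁ (m₂ + 2n₂ + v − √D)/(2√D)`, where `D = (v+m₂)² + 4v n₂`:
`f''(x*) = −D^{3/2}/(2 m₁ n₂ (n₂+m₂))`, with `D^{3/2} = D √D`. -/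
theorem phase_second_derivative_at_stationary_point (m₁ m₂ n₂ v : ℝ)
    (hm₁ : 0 < m₁) (hm₂ : 0 < m₂) (hn₂ : 0 < n₂)
    (hD : 0 < (v + m₂) ^ 2 + 4 * v * n₂) (hpos : 0 < 2 * n₂ + m₂ + v) :
    iteratedDeriv 2
      (fun x : ℝ =>
        2 * Real.sqrt (x * (x + m₁) * (n₂ * (n₂ + m₂))) - 2 * x * n₂ - x * m₂ - n₂ * m₁)
      (m₁ * (m₂ + 2 * n₂ + v - Real.sqrt ((v + m₂) ^ 2 + 4 * v * n₂)) /
        (2 * Real.sqrt ((v + m₂) ^ 2 + 4 * v * n₂))) =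
      -(((v + m₂) ^ 2 + 4 * v * n₂) * Real.sqrt ((v + m₂) ^ 2 + 4 * v * n₂)) /
        (2 * m₁ * n₂ * (n₂ + m₂)) := by
  have hprod : 0 < m₁ * n₂ * (n₂ + m₂) := by positivity
  exact (phase_second_derivative_at_stationary_point_general hprod.ne' hD).trans
    (by rw [abs_of_pos hprod, ← mul_assoc, ← mul_assoc]; rfl)
end

section
/- Fix real numbers 0 < a ≤ b. There is a constant C = C(a,b) such that for every integer k ≥ 2 and every s ∈ ℂ with a ≤ Re(s) ≤ b, one has Γ(k+s)/Γ(k) = k^{s}·(1 + R(k,s)) with |R(k,s)| ≤ C·(1+|s|)²/k, where k^{s} = exp(s·log k) and Γ is the Gamma function. -/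
/-!
Put `F(x) = Γ(x + s) / (Γ(x) x ^ s)` for real `x ≥ 1` and `0 ≤ Re s`. Comparing
`|Γ(x + s)| ≤ Γ(x + Re s)` with log-convexity of `Γ` between `x` and `x + m` bounds `F` by `m!`
whenever `Re s < m`, and Euler's limit formula gives `F(x + n) → 1`. The functional equation reads
`F(x + 1) = F(x) (1 + s / x) (1 + 1 / x) ^ (-s)`, whose factor differs from `1` only to second order
in `1 / x`, so that `|F(x + 1) - F(x)|` is dominated by a multiple of `1 / x - 1 / (x + 1)`.
Telescoping from `x` to infinity bounds `|1 - F(x)|` by the same multiple of `1 / x`.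
-/

open Filter Finset
open scoped Nat Topology

lemma norm_complexGamma_le {s : ℂ} (hs : 0 < s.re) : ‖Complex.Gamma s‖ ≤ Real.Gamma s.re := by
  rw [Complex.Gamma_eq_integral hs, Complex.GammaIntegral, Real.Gamma_eq_integral hs]
  refine (MeasureTheory.norm_integral_le_integral_norm _).trans_eq ?_
  refine MeasureTheory.setIntegral_congr_fun measurableSet_Ioi fun x (hx : 0 < x) ↦ ?_
  simp [Complex.norm_cpow_eq_rpow_re_of_pos hx, Complex.norm_exp]

lemma realGamma_add_natCast_le {x : ℝ} (hx : 1 ≤ x) (m : ℕ) :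
    Real.Gamma (x + m) ≤ m ! * x ^ m * Real.Gamma x := by
  induction m with
  | zero => simp
  | succ m ih =>
    have hfactor : x + m ≤ (m + 1) * x := by nlinarith [m.cast_nonneg (α := ℝ)]
    calc Real.Gamma (x + (m + 1 : ℕ))
        = (x + m) * Real.Gamma (x + m) := by
          rw [← Real.Gamma_add_one (by positivity), Nat.cast_succ, add_assoc]
      _ ≤ ((m + 1) * x) * (m ! * x ^ m * Real.Gamma x) := by
          gcongr
      _ = (m + 1)! * x ^ (m + 1) * Real.Gamma x := by
          rw [Nat.factorial_succ]
          push_cast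
          ring

lemma realGamma_add_le {x σ : ℝ} {m : ℕ} (hx : 1 ≤ x) (hσ : 0 ≤ σ) (hm : σ < m) :
    Real.Gamma (x + σ) ≤ m ! * (Real.Gamma x * x ^ σ) := by
  have hx₀ : 0 < x := by linarith
  have hΓ : 0 < Real.Gamma x := Real.Gamma_pos_of_pos hx₀
  have hfact : (1 : ℝ) ≤ m ! := mod_cast m.factorial_pos
  obtain rfl | hσ₀ := hσ.eq_or_lt
  · simpa using le_mul_of_one_le_left hΓ.le hfact
  have hm₀ : (0 : ℝ) < m := hσ₀.trans hm
  set θ : ℝ := σ / m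
  have hmθ : m * θ = σ := mul_div_cancel₀ σ hm₀.ne'
  have hθ₀ : 0 < θ := div_pos hσ₀ hm₀
  have hθ₁ : θ < 1 := (div_lt_one hm₀).2 hm
  calc Real.Gamma (x + σ)
      = Real.Gamma ((1 - θ) * x + θ * (x + m)) := by rw [← hmθ]; ring_nf
    _ ≤ Real.Gamma x ^ (1 - θ) * Real.Gamma (x + m) ^ θ :=
        Real.Gamma_mul_add_mul_le_rpow_Gamma_mul_rpow_Gamma hx₀ (by positivity)
          (sub_pos.2 hθ₁) hθ₀ (sub_add_cancel 1 θ)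
    _ ≤ Real.Gamma x ^ (1 - θ) * (m ! * x ^ m * Real.Gamma x) ^ θ := by
        gcongr
        exact realGamma_add_natCast_le hx m
    _ = m ! ^ θ * (Real.Gamma x * x ^ σ) := by
        rw [Real.mul_rpow (by positivity) hΓ.le, Real.mul_rpow (by positivity) (by positivity),
          ← Real.rpow_natCast_mul hx₀.le, hmθ, Real.rpow_sub hΓ, Real.rpow_one]
        field_simp
    _ ≤ m ! * (Real.Gamma x * x ^ σ) := by
        gcongr
        exact Real.rpow_le_self_of_one_le hfact hθ₁.le

lemma complexGamma_add_natCast {z : ℂ} (hz : ∀ n : ℕ, z ≠ -n) (n : ℕ) :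
    Complex.Gamma (z + n) = Complex.Gamma z * ∏ j ∈ range n, (z + j) := by
  induction n with
  | zero => simp
  | succ n ih =>
    have hzn : z + n ≠ 0 := fun h ↦ hz n (eq_neg_of_add_eq_zero_left h)
    rw [prod_range_succ, ← mul_assoc, ← ih, Nat.cast_succ, ← add_assoc,
      Complex.Gamma_add_one _ hzn, mul_comm]

lemma tendsto_complexGamma_add_natCast_div {z : ℂ} (hz : ∀ n : ℕ, z ≠ -n) :
    Tendsto (fun n : ℕ ↦ Complex.Gamma (z + (n + 1 : ℕ)) / (n ! * (n : ℂ) ^ z)) atTop (𝓝 1) := by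
  have hΓ : Complex.Gamma z ≠ 0 := Complex.Gamma_ne_zero hz
  have hlim : Tendsto (fun n ↦ Complex.Gamma z / Complex.GammaSeq z n) atTop (𝓝 1) :=
    div_self hΓ ▸ tendsto_const_nhds.div (Complex.GammaSeq_tendsto_Gamma z) hΓ
  refine hlim.congr fun n ↦ ?_
  rw [complexGamma_add_natCast hz, Complex.GammaSeq, div_div_eq_mul_div, mul_comm (n ! : ℂ)]

lemma tendsto_add_natCast_succ_cpow_div {x : ℝ} (hx : 0 ≤ x) (s : ℂ) :
    Tendsto (fun n : ℕ ↦ ((x + (n + 1 : ℕ) : ℝ) : ℂ) ^ s / (n : ℂ) ^ s) atTop (𝓝 1) := by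
  have hbase : Tendsto (fun n : ℕ ↦ ((1 + (x + 1) / n : ℝ) : ℂ)) atTop (𝓝 1) := by
    simpa using! (tendsto_const_div_atTop_nhds_zero_nat (x + 1)).const_add 1 |>.ofReal
  have hpow := (continuousAt_cpow_const (b := s) Complex.one_mem_slitPlane).tendsto.comp hbase
  rw [Complex.one_cpow] at hpow
  refine hpow.congr' ?_
  filter_upwards [eventually_ne_atTop 0] with n hn
  rw [Function.comp_apply, ← Complex.ofReal_natCast n,
    ← Complex.div_cpow_ofReal_nonneg (by positivity) (by positivity), ← Complex.ofReal_div]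
  congr 2
  push_cast
  field_simp
  ring

lemma hasDerivAt_one_add_mul_mul_cpow_neg (s : ℂ) {t : ℝ} (ht : -1 < t) :
    HasDerivAt (fun u : ℝ ↦ (1 + s * u) * (1 + u : ℂ) ^ (-s))
      (s * (1 - s) * t * (1 + t : ℂ) ^ (-s - 1)) t := by
  have hpos : 0 < 1 + t := by linarith
  have hslit : 1 + (t : ℂ) ∈ Complex.slitPlane := by
    exact_mod_cast Complex.ofReal_mem_slitPlane.2 hpos
  have hlin : HasDerivAt (fun z : ℂ ↦ 1 + s * z) s t := by
    simpa using ((hasDerivAt_id (t : ℂ)).const_mul s).const_add 1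
  have hpow : HasDerivAt (fun z : ℂ ↦ (1 + z) ^ (-s)) (-s * (1 + t) ^ (-s - 1)) t := by
    simpa using ((hasDerivAt_id (t : ℂ)).const_add 1).cpow_const (c := -s) hslit
  refine ((hlin.mul hpow).congr_deriv ?_).comp_ofReal
  have hsucc : (1 + t : ℂ) ^ (-s) = (1 + t) ^ (-s - 1) * (1 + t) := by
    have hne := Complex.slitPlane_ne_zero hslit
    rw [Complex.cpow_sub _ _ hne, Complex.cpow_one, div_mul_cancel₀ _ hne]
  rw [hsucc]
  ring

lemma norm_one_add_mul_mul_cpow_neg_sub_one_le {s : ℂ} (hs : -1 ≤ s.re) {t : ℝ} (ht : 0 ≤ t) :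
    ‖(1 + s * t) * (1 + t : ℂ) ^ (-s) - 1‖ ≤ ‖s‖ * ‖1 - s‖ * t ^ 2 / 2 := by
  have hderiv (u : ℝ) (hu : 0 ≤ u) :=
    (hasDerivAt_one_add_mul_mul_cpow_neg s (by linarith : -1 < u)).sub_const 1
  refine image_norm_le_of_norm_deriv_right_le_deriv_boundary
    (B := fun u ↦ ‖s‖ * ‖1 - s‖ * u ^ 2 / 2) (B' := fun u ↦ ‖s‖ * ‖1 - s‖ * u)
    (fun u hu ↦ (hderiv u hu.1).continuousAt.continuousWithinAt)
    (fun u hu ↦ (hderiv u hu.1).hasDerivWithinAt) (by simp) (fun u ↦ ?_) (fun u hu ↦ ?_)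
    (Set.right_mem_Icc.2 ht)
  · refine (((hasDerivAt_pow 2 u).const_mul (‖s‖ * ‖1 - s‖)).div_const 2).congr_deriv ?_
    push_cast
    ring
  · have hu₀ : 0 ≤ u := hu.1
    have hpow : ‖(1 + u : ℂ) ^ (-s - 1)‖ ≤ 1 := by
      rw [← Complex.ofReal_one, ← Complex.ofReal_add,
        Complex.norm_cpow_eq_rpow_re_of_pos (by positivity)]
      exact Real.rpow_le_one_of_one_le_of_nonpos (by linarith) (by simpa using by linarith)
    rw [norm_mul, norm_mul, norm_mul, Complex.norm_of_nonneg hu₀]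
    exact mul_le_of_le_one_right (by positivity) hpow

lemma dist_le_of_tendsto_of_dist_succ_le_sub {α : Type*} [PseudoMetricSpace α] {u : ℕ → α} {l : α}
    {g : ℕ → ℝ} (hg : ∀ n, 0 ≤ g n) (hu : ∀ n, dist (u n) (u (n + 1)) ≤ g n - g (n + 1))
    (hl : Tendsto u atTop (𝓝 l)) : dist (u 0) l ≤ g 0 := by
  refine le_of_tendsto (tendsto_const_nhds.dist hl) (.of_forall fun n ↦ ?_)
  calc dist (u 0) (u n)
      ≤ ∑ i ∈ range n, (g i - g (i + 1)) := dist_le_range_sum_of_dist_le n fun _ ↦ hu _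
    _ = g 0 - g n := sum_range_sub' g n
    _ ≤ g 0 := sub_le_self _ (hg n)

/-- The quotient `Γ(x + s) / (Γ(x) x ^ s)`, that is, `1 + R(x, s)` in the asymptotic formula
`Γ(x + s) / Γ(x) = x ^ s (1 + R(x, s))`. It is meant for `x > 0`, where `x ^ s` is
`exp (s log x)` with the real logarithm; at `x = 0` it takes the junk value `0`. -/
noncomputable def normalizedGammaRatio (s : ℂ) (x : ℝ) : ℂ :=
  Complex.Gamma (x + s) / (Complex.Gamma x * (x : ℂ) ^ s)

namespace normalizedGammaRatio

variable {s : ℂ} {x : ℝ} {m : ℕ}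

lemma cpow_mul_eq (hx : 0 < x) :
    (x : ℂ) ^ s * normalizedGammaRatio s x = Complex.Gamma (x + s) / Complex.Gamma x := by
  have hpow : (x : ℂ) ^ s ≠ 0 := Complex.cpow_ne_zero_iff.2 (.inl (mod_cast hx.ne'))
  rw [normalizedGammaRatio]
  field_simp

lemma norm_le (hx : 1 ≤ x) (hs : 0 ≤ s.re) (hm : s.re < m) :
    ‖normalizedGammaRatio s x‖ ≤ m ! := by
  have hx₀ : 0 < x := by linarith
  have hΓ : 0 < Real.Gamma x := Real.Gamma_pos_of_pos hx₀
  rw [normalizedGammaRatio, norm_div, norm_mul, Complex.Gamma_ofReal,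
    Complex.norm_of_nonneg hΓ.le, Complex.norm_cpow_eq_rpow_re_of_pos hx₀,
    div_le_iff₀ (by positivity)]
  calc ‖Complex.Gamma (x + s)‖
      ≤ Real.Gamma (x + s.re) := by
        simpa using norm_complexGamma_le (s := x + s) (by simpa using by linarith)
    _ ≤ m ! * (Real.Gamma x * x ^ s.re) := realGamma_add_le hx hs hm

lemma add_one (hx : 0 < x) (hs : (x : ℂ) + s ≠ 0) :
    normalizedGammaRatio s (x + 1) =
      normalizedGammaRatio s x * ((1 + s * (1 / x : ℝ)) * (1 + (1 / x : ℝ) : ℂ) ^ (-s)) := by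
  have hx₀ : (x : ℂ) ≠ 0 := mod_cast hx.ne'
  have hpow : ((x + 1 : ℝ) : ℂ) ^ s = (x : ℂ) ^ s * (1 + (1 / x : ℝ) : ℂ) ^ s := by
    rw [← Complex.ofReal_one, ← Complex.ofReal_add,
      ← Complex.mul_cpow_ofReal_nonneg hx.le (by positivity), ← Complex.ofReal_mul, mul_add,
      mul_one_div_cancel hx.ne', mul_one]
  rw [normalizedGammaRatio, normalizedGammaRatio, hpow, Complex.ofReal_add, Complex.ofReal_one,
    add_right_comm, Complex.Gamma_add_one _ hs, Complex.Gamma_add_one _ hx₀, Complex.cpow_neg]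
  generalize (1 + (1 / x : ℝ) : ℂ) ^ s = w
  push_cast
  field_simp

lemma tendsto_add_natCast (hx : 0 < x) (hs : ∀ n : ℕ, (x : ℂ) + s ≠ -n) :
    Tendsto (fun n : ℕ ↦ normalizedGammaRatio s (x + n)) atTop (𝓝 1) := by
  have hx' (n : ℕ) : (x : ℂ) ≠ -n := by
    exact_mod_cast (by linarith [n.cast_nonneg (α := ℝ)] : -(n : ℝ) < x).ne'
  have hlim := ((tendsto_complexGamma_add_natCast_div hs).div
    (tendsto_complexGamma_add_natCast_div hx') one_ne_zero).div
    (tendsto_add_natCast_succ_cpow_div hx.le s) one_ne_zero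
  rw [div_one, div_one] at hlim
  refine (tendsto_add_atTop_iff_nat 1).1 (hlim.congr' ?_)
  filter_upwards [eventually_ne_atTop 0] with n hn
  have hn₀ : (n : ℂ) ≠ 0 := mod_cast hn
  have hfact : (n ! : ℂ) ≠ 0 := mod_cast n.factorial_ne_zero
  have hnx : (n : ℂ) ^ (x : ℂ) ≠ 0 := Complex.cpow_ne_zero_iff.2 (.inl hn₀)
  have hns : (n : ℂ) ^ s ≠ 0 := Complex.cpow_ne_zero_iff.2 (.inl hn₀)
  simp only [Pi.div_apply]
  rw [normalizedGammaRatio, Complex.cpow_add _ _ hn₀, add_right_comm]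
  push_cast
  field_simp

lemma dist_add_one_le (hx : 1 ≤ x) (hs : 0 ≤ s.re) (hm : s.re < m) :
    dist (normalizedGammaRatio s x) (normalizedGammaRatio s (x + 1)) ≤
      m ! * (‖s‖ * ‖1 - s‖) / x - m ! * (‖s‖ * ‖1 - s‖) / (x + 1) := by
  have hx₀ : 0 < x := by linarith
  have hxs : (x : ℂ) + s ≠ 0 := Complex.ne_zero_of_re_pos (by simpa using by linarith)
  have hinv : (1 / x) ^ 2 / 2 ≤ 1 / x - 1 / (x + 1) := by
    rw [div_sub_div _ _ (by positivity) (by positivity), div_pow, div_div,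
      div_le_div_iff₀ (by positivity) (by positivity)]
    nlinarith
  rw [dist_comm, dist_eq_norm, add_one hx₀ hxs, ← mul_sub_one, norm_mul]
  calc _ ≤ m ! * (‖s‖ * ‖1 - s‖ * (1 / x) ^ 2 / 2) := by
        gcongr
        · exact norm_le hx hs hm
        · exact norm_one_add_mul_mul_cpow_neg_sub_one_le (by linarith) (by positivity)
    _ = m ! * (‖s‖ * ‖1 - s‖) * ((1 / x) ^ 2 / 2) := by ring
    _ ≤ m ! * (‖s‖ * ‖1 - s‖) * (1 / x - 1 / (x + 1)) := by gcongr
    _ = _ := by ring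

lemma norm_sub_one_le (hx : 1 ≤ x) (hs : 0 ≤ s.re) (hm : s.re < m) :
    ‖normalizedGammaRatio s x - 1‖ ≤ m ! * (‖s‖ * ‖1 - s‖) / x := by
  have hx₀ : 0 < x := by linarith
  have hxs (n : ℕ) : (x : ℂ) + s ≠ -n := fun h ↦ by
    have hre : x + s.re = -n := by simpa using congrArg Complex.re h
    linarith [n.cast_nonneg (α := ℝ)]
  have hstep (n : ℕ) := dist_add_one_le (x := x + n) (by linarith [n.cast_nonneg (α := ℝ)]) hs hm
  have hdist := dist_le_of_tendsto_of_dist_succ_le_sub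
    (u := fun n : ℕ ↦ normalizedGammaRatio s (x + n))
    (g := fun n : ℕ ↦ m ! * (‖s‖ * ‖1 - s‖) / (x + n)) (fun n ↦ by positivity)
    (fun n ↦ by simpa only [Nat.cast_succ, add_assoc] using hstep n) (tendsto_add_natCast hx₀ hxs)
  simpa [dist_eq_norm] using hdist

end normalizedGammaRatio

theorem gamma_ratio_stirling_strip_general (b : ℝ) :
    ∃ C : ℝ, ∀ x : ℝ, 1 ≤ x → ∀ s : ℂ, 0 ≤ s.re → s.re ≤ b →
      ∃ R : ℂ,
        Complex.Gamma (x + s) / Complex.Gamma x = (x : ℂ) ^ s * (1 + R) ∧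
        ‖R‖ ≤ C * (1 + ‖s‖) ^ 2 / x := by
  obtain ⟨m, hm⟩ := exists_nat_gt b
  refine ⟨m !, fun x hx s hs hsb ↦ ⟨normalizedGammaRatio s x - 1, ?_, ?_⟩⟩
  · rw [add_sub_cancel, normalizedGammaRatio.cpow_mul_eq (by linarith)]
  · have hs₁ : ‖1 - s‖ ≤ 1 + ‖s‖ := by simpa using norm_sub_le 1 s
    calc ‖normalizedGammaRatio s x - 1‖
        ≤ m ! * (‖s‖ * ‖1 - s‖) / x :=
          normalizedGammaRatio.norm_sub_one_le hx hs (hsb.trans_lt hm)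
      _ ≤ m ! * (1 + ‖s‖) ^ 2 / x := by
          gcongr
          nlinarith [norm_nonneg s]

/-- Stirling-type asymptotic for a ratio of Gamma functions in a vertical strip:
for fixed `0 < a ≤ b` there is a constant `C = C(a,b)` such that for every integer
`k ≥ 2` and every `s ∈ ℂ` with `a ≤ Re s ≤ b`,
`Γ(k+s)/Γ(k) = k^s (1 + R(k,s))` with `|R(k,s)| ≤ C (1+|s|)²/k`. -/
theorem gamma_ratio_stirling_strip (a b : ℝ) (ha : 0 < a) (hab : a ≤ b) :
    ∃ C : ℝ, ∀ k : ℕ, 2 ≤ k → ∀ s : ℂ, a ≤ s.re → s.re ≤ b →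
      ∃ R : ℂ,
        Complex.Gamma ((k : ℂ) + s) / Complex.Gamma (k : ℂ) = (k : ℂ) ^ s * (1 + R) ∧
        ‖R‖ ≤ C * (1 + ‖s‖) ^ 2 / (k : ℝ) := by
  obtain ⟨C, hC⟩ := gamma_ratio_stirling_strip_general b
  exact ⟨C, fun k hk s hsa hsb ↦ by
    simpa using hC k (mod_cast one_le_two.trans hk) s (ha.le.trans hsa) hsb⟩
end
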